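/- arXiv:1612.03351 — 2 statements merged into one kernel-verified Lean document; each statement's English description precedes it below -/
import Mathlib

section
/- For every τ ∈ H and every x ∈ ℝ, F(g_{−1/τ})(x) = −i · √(−iτ) · g_τ(x), where F(g)(x) := ∫_ℝ g(w) e(wx) dw and √(−iτ) denotes the principal branch of the square root. -/
open Complex MeasureTheory
open scoped Classical

noncomputable section

/-- `e(a) = exp(2πia)`. -/
def e (a : ℂ) : ℂ := Complex.exp (2 * (Real.pi : ℂ) * Complex.I * a)

/-- The Fourier transform `F(g)(x) = ∫ g(w) e(wx) dw`. -/
def fourierT (g : ℝ → ℂ) (x : ℝ) : ℂ := ∫ w : ℝ, g w * e ((w * x : ℝ))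

/-- The operator `E_σ(f)(x) = e(x²σ/2) ∫_0^x e(-w²σ/2) f(w) dw`. -/
def Eop (σ : ℂ) (f : ℝ → ℂ) (x : ℝ) : ℂ :=
  e ((x : ℂ)^2 * σ / 2) * ∫ w in (0:ℝ)..x, e (-(w : ℂ)^2 * σ / 2) * f w

/-- `ω_τ(x) = e(-x²τ/2) ∑_{m ∈ ℤ+1/2, m ≥ |x|} e(m²τ/2 + m/2)`. -/
def omega (τ : ℂ) (x : ℝ) : ℂ :=
  e (-(x : ℂ)^2 * τ / 2) *
    ∑' m : ℤ, if |x| ≤ (m : ℝ) + 1/2 then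
      e (((m : ℂ) + 1/2)^2 / 2 * τ + ((m : ℂ) + 1/2) / 2) else 0

/-- `η³(τ) = -i ∑_{m ∈ ℤ+1/2} m e(m²τ/2 + m/2)`. -/
def eta3 (τ : ℂ) : ℂ :=
  -Complex.I * ∑' m : ℤ, ((m : ℂ) + 1/2) * e (((m : ℂ) + 1/2)^2 / 2 * τ + ((m : ℂ) + 1/2) / 2)

/-- The complementary error function. -/
def erfc (x : ℝ) : ℝ := (2 / Real.sqrt Real.pi) * ∫ t in Set.Ioi x, Real.exp (-t^2)

/-- `g⁺_τ`. -/
def gplus (τ : ℂ) (x : ℝ) : ℂ :=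
  e (-(x : ℂ)^2 * τ / 2) * ((Real.sign x : ℂ) / (Complex.I * eta3 τ)) *
    ∑' m : ℤ, if |x| < (m : ℝ) + 1/2 then
      (((m : ℝ) + 1/2 - |x| : ℝ) : ℂ) * e (((m : ℂ) + 1/2)^2 / 2 * τ + ((m : ℂ) + 1/2) / 2)
    else 0

/-- `g*_τ`. -/
def gstar (τ : ℂ) (x : ℝ) : ℂ :=
  e (-(x : ℂ)^2 * τ / 2) * ((Real.sign x : ℂ) / 2) *
    (erfc (Real.sqrt (2 * Real.pi * τ.im) * |x|) : ℂ)

/-- `g_τ = g⁺_τ - g*_τ`. -/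
def gfun (τ : ℂ) (x : ℝ) : ℂ := gplus τ x - gstar τ x

/-- The operator `ξ_k f = 2i v^k conj(∂f/∂τ̄)`, with `∂/∂τ̄ = (1/2)(∂/∂u + i ∂/∂v)`. -/
def xi (k : ℝ) (f : ℂ → ℂ) (τ : ℂ) : ℂ :=
  2 * Complex.I * ((τ.im ^ k : ℝ) : ℂ) *
    (starRingEnd ℂ) ((1/2 : ℂ) * (fderiv ℝ f τ 1 + Complex.I * fderiv ℝ f τ Complex.I))

/-- Sum of divisors function `σ₁`. -/
def sigma1 (n : ℕ) : ℕ := ∑ d ∈ Nat.divisors n, d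

/-- The weight 2 Eisenstein series `E₂`. -/
def E2 (τ : ℂ) : ℂ := 1 - 24 * ∑' n : ℕ, (sigma1 (n+1) : ℂ) * e ((n + 1 : ℂ) * τ)

/-- `ϑ̃_{N,h}`. -/
def tvtheta (N : ℕ) (h : ℝ) (τ : ℂ) : ℂ :=
  (if ∃ m : ℤ, h = (m : ℝ) + 1/2 then
      e ((h : ℂ) / 2) * E2 τ / (12 * (N : ℂ) * Complex.I * eta3 τ) else 0)
  + ∑' n : ℤ, gfun τ ((N : ℝ) * n + h)

/-- The Schwartz function `φ_τ(x,y) = √(2v)·x·e(x²τ/2 - y²τ̄/2)`. -/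
def Phi (τ : ℂ) (x y : ℝ) : ℂ :=
  (Real.sqrt (2 * τ.im) : ℂ) * (x : ℂ) *
    e ((x : ℂ)^2 * τ / 2 - (y : ℂ)^2 * (starRingEnd ℂ) τ / 2)

/-- The signature (1,1) bilinear form `B((a₁,a₂),(b₁,b₂)) = a₁b₂ + a₂b₁`. -/
def Bform (a b : ℝ × ℝ) : ℝ := a.1 * b.2 + a.2 * b.1

/-- `Z⁺_t = (t/√2, t⁻¹/√2)`. -/
def Zp (t : ℝ) : ℝ × ℝ := (t / Real.sqrt 2, t⁻¹ / Real.sqrt 2)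

/-- `Z⁻_t = (t/√2, -t⁻¹/√2)`. -/
def Zm (t : ℝ) : ℝ × ℝ := (t / Real.sqrt 2, -t⁻¹ / Real.sqrt 2)

end

lemma e_add (a b : ℂ) : e (a + b) = e a * e b := by
  unfold e; rw [← Complex.exp_add]; congr 1; ring

lemma e_ne_zero (a : ℂ) : e a ≠ 0 := Complex.exp_ne_zero _

lemma norm_e (a : ℂ) : ‖e a‖ = Real.exp (-(2 * Real.pi * a.im)) := by
  unfold e
  rw [Complex.norm_exp]
  congr 1
  simp [Complex.mul_re, Complex.mul_im]

/-- coefficients -/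
noncomputable def aco (τ : ℂ) (m : ℤ) : ℂ :=
  e (((m : ℂ) + 1/2)^2 / 2 * τ + ((m : ℂ) + 1/2) / 2)

noncomputable def thT (τ z : ℂ) : ℂ := ∑' m : ℤ, aco τ m * e (((m : ℂ) + 1/2) * z)

lemma aco_mul_e (τ z : ℂ) (m : ℤ) : aco τ m * e (((m : ℂ) + 1/2) * z) =
    e (τ / 8 + 1 / 4 + z / 2) * jacobiTheta₂_term m (z + 1/2 + τ/2) τ := by
  unfold aco e jacobiTheta₂_term
  rw [← Complex.exp_add, ← Complex.exp_add]; congr 1; ring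

lemma thT_eq (τ z : ℂ) : thT τ z = e (τ / 8 + 1 / 4 + z / 2) * jacobiTheta₂ (z + 1/2 + τ/2) τ := by
  unfold thT jacobiTheta₂
  simp_rw [aco_mul_e, tsum_mul_left]

lemma aco_eq (τ : ℂ) (m : ℤ) : aco τ m = e (τ / 8 + 1 / 4) * jacobiTheta₂_term m (1/2 + τ/2) τ := by
  have := aco_mul_e τ 0 m
  simpa [e] using this

lemma hasSum_thT {τ : ℂ} (hτ : 0 < τ.im) (z : ℂ) :
    HasSum (fun m : ℤ => aco τ m * e (((m : ℂ) + 1/2) * z)) (thT τ z) := by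
  simp_rw [thT_eq, aco_mul_e]
  exact (hasSum_jacobiTheta₂_term _ hτ).mul_left _

lemma hasSum_eta {τ : ℂ} (hτ : 0 < τ.im) :
    HasSum (fun m : ℤ => ((m : ℂ) + 1/2) * aco τ m) (I * eta3 τ) := by
  have h : Summable (fun m : ℤ => ((m : ℂ) + 1/2) * aco τ m) := by
    simp_rw [aco_eq]
    have h1 := (hasSum_jacobiTheta₂_term (1/2+τ/2) hτ).summable
    have h2 := (hasSum_jacobiTheta₂'_term (1/2+τ/2) hτ).summable
    have h3 := ((h2.mul_left (1/(2 * Real.pi * I))).add (h1.mul_left (1/2))).mul_left (e (τ / 8 + 1 / 4))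
    refine h3.congr fun m => ?_
    unfold jacobiTheta₂'_term
    have := Complex.two_pi_I_ne_zero
    field_simp
  have := h.hasSum
  convert this using 1
  unfold eta3 aco
  rw [← mul_assoc]; simp

lemma hasDerivAt_thT {τ : ℂ} (hτ : 0 < τ.im) :
    HasDerivAt (thT τ) (2 * Real.pi * I * (I * eta3 τ)) 0 := by
  have h1 : HasDerivAt (fun z => jacobiTheta₂ (z + 1/2 + τ/2) τ) (jacobiTheta₂' (1/2+τ/2) τ) 0 := by
    have h := hasDerivAt_jacobiTheta₂_fst (0 + 1/2+τ/2) hτ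
    have h' : HasDerivAt (fun z : ℂ => z + 1/2 + τ/2) 1 0 := ((hasDerivAt_id _).add_const _).add_const _
    have := HasDerivAt.comp (0:ℂ) h h'
    simpa [Function.comp_def] using this
  have h2 : HasDerivAt (fun z => e (τ / 8 + 1 / 4 + z / 2)) (e (τ / 8 + 1 / 4) * (2 * Real.pi * I * (1/2))) 0 := by
    have h : HasDerivAt (fun z : ℂ => 2 * (Real.pi:ℂ) * I * (τ / 8 + 1 / 4 + z / 2)) (2 * (Real.pi:ℂ) * I * (1/2)) 0 :=
      (((hasDerivAt_id _).div_const 2).const_add _).const_mul _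
    have := h.cexp
    simpa [e] using this
  have h3 := h2.mul h1
  have h5 := (hasSum_eta hτ).mul_left (2 * Real.pi * I)
  have h6 := ((hasSum_jacobiTheta₂_term (1/2+τ/2) hτ).mul_left (e (τ / 8 + 1 / 4) * (2 * Real.pi * I * (1/2)))).add
    ((hasSum_jacobiTheta₂'_term (1/2+τ/2) hτ).mul_left (e (τ / 8 + 1 / 4)))
  have h7 := h5.unique (f := fun m : ℤ => 2 * Real.pi * I * (((m : ℂ) + 1/2) * aco τ m)) (by
    convert h6 using 1
    funext m
    rw [aco_eq]; unfold jacobiTheta₂'_term; ring)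
  rw [h7]
  have h8 := h3.congr_of_eventuallyEq (f₁ := thT τ) (.of_forall fun z => thT_eq τ z)
  rw [zero_add, zero_div, add_zero] at h8
  exact h8

lemma neg_inv_im {τ : ℂ} (hτ : 0 < τ.im) : 0 < (-1/τ).im := by
    rw [div_eq_mul_inv, neg_one_mul, neg_im, inv_im, neg_div, neg_neg]
    exact div_pos hτ (normSq_pos.mpr (fun h ↦ lt_irrefl 0 (zero_im ▸ h ▸ hτ)))

lemma tau_ne {τ : ℂ} (hτ : 0 < τ.im) : τ ≠ 0 := by rintro rfl; simp at hτ

lemma thT_fe {τ : ℂ} (hτ : 0 < τ.im) (z : ℂ) :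
    thT τ z = -I * (1 / (-I * τ) ^ (1 / 2 : ℂ)) * e (z^2 * (-1/τ) / 2) * thT (-1/τ) ((-1/τ) * z) := by
  have h0 := tau_ne hτ
  rw [thT_eq, thT_eq, jacobiTheta₂_functional_equation]
  have h1 : jacobiTheta₂ ((-1/τ) * z + 1/2 + (-1/τ)/2) (-1/τ) = jacobiTheta₂ ((z + 1/2 + τ/2)/τ) (-1/τ) := by
    rw [← jacobiTheta₂_neg_left ((z + 1/2 + τ/2)/τ), ← jacobiTheta₂_add_left (-((z + 1/2 + τ/2)/τ))]
    congr 1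
    field_simp; ring
  rw [h1]
  have h2 : -I = e (-1/4) := by
    unfold e
    rw [show 2 * (Real.pi:ℂ) * I * (-1/4) = ((-(Real.pi/2) : ℝ):ℂ) * I by push_cast; ring, Complex.exp_mul_I,
      ← Complex.ofReal_cos, ← Complex.ofReal_sin, Real.cos_neg, Real.sin_neg, Real.cos_pi_div_two, Real.sin_pi_div_two]
    simp
  have h3 : e (τ / 8 + 1 / 4 + z / 2) * cexp (-Real.pi * I * (z + 1/2 + τ/2) ^ 2 / τ)
     = -I * e (z^2 * (-1/τ) / 2) * e (-1 / τ / 8 + 1 / 4 + -1 / τ * z / 2) := by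
    rw [h2, ← e_add, ← e_add]
    unfold e
    rw [← Complex.exp_add]
    congr 1
    field_simp
    ring
  linear_combination (1 / (-I * τ) ^ (1 / 2 : ℂ)) * jacobiTheta₂ ((z + 1/2 + τ/2)/τ) (-1/τ) * h3

lemma eta3_fe {τ : ℂ} (hτ : 0 < τ.im) :
    eta3 τ = -I * (1 / (-I * τ) ^ (1 / 2 : ℂ)) * (-1/τ) * eta3 (-1/τ) := by
  have h1 := hasDerivAt_thT hτ
  have h2 : HasDerivAt (fun z : ℂ => thT (-1/τ) ((-1/τ) * z)) (2 * Real.pi * I * (I * eta3 (-1/τ)) * (-1/τ)) 0 := by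
    have h := hasDerivAt_thT (neg_inv_im hτ)
    have h' : HasDerivAt (fun z : ℂ => (-1/τ) * z) (-1/τ) 0 := by
      simpa using (hasDerivAt_id (0:ℂ)).const_mul (-1/τ)
    exact HasDerivAt.comp_of_eq (0:ℂ) h h' (by simp)
  have h3 : HasDerivAt (fun z : ℂ => e (z^2 * (-1/τ) / 2)) 0 0 := by
    have h : HasDerivAt (fun z : ℂ => 2 * (Real.pi:ℂ) * I * (z^2 * (-1/τ) / 2)) 0 0 := by
      have := ((((hasDerivAt_id (0:ℂ)).pow 2).mul_const (-1/τ)).div_const 2).const_mul (2 * (Real.pi:ℂ) * I)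
      simpa using this
    simpa [e] using h.cexp
  have h4 := (h3.const_mul (-I * (1 / (-I * τ) ^ (1 / 2 : ℂ)))).mul h2
  have h5 := h4.congr_of_eventuallyEq (f₁ := thT τ) (.of_forall fun z => thT_fe hτ z)
  have h6 := h1.unique h5
  have h7 := Complex.two_pi_I_ne_zero
  simp only [mul_zero, zero_mul, zero_add, e, ne_eq, OfNat.ofNat_ne_zero, not_false_eq_true, zero_pow, zero_div, Complex.exp_zero, mul_one] at h6
  have h8 : (2 * (Real.pi:ℂ) * I) * I ≠ 0 := mul_ne_zero h7 I_ne_zero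
  apply mul_left_cancel₀ h8
  linear_combination h6

lemma norm_aco (τ : ℂ) (m : ℤ) : ‖aco τ m‖ = Real.exp (-(Real.pi * τ.im * ((m:ℝ)+1/2)^2)) := by
  unfold aco
  rw [norm_e]
  congr 1
  have : (((m : ℂ) + 1/2)^2 / 2 * τ + ((m : ℂ) + 1/2) / 2) = ((((m:ℝ)+1/2)^2/2 : ℝ) : ℂ) * τ + ((((m:ℝ)+1/2)/2 : ℝ):ℂ) := by
    push_cast; ring
  rw [this, Complex.add_im, Complex.im_ofReal_mul, Complex.ofReal_im]
  ring

/-- bound -/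
noncomputable def bco (v : ℝ) (m : ℤ) : ℝ := |(m:ℝ)+1/2| * Real.exp (-(Real.pi * v * ((m:ℝ)+1/2)^2))

lemma norm_bco (τ : ℂ) (m : ℤ) : ‖((m : ℂ) + 1/2) * aco τ m‖ = bco τ.im m := by
  rw [norm_mul, norm_aco, bco]
  congr 1
  rw [← Real.norm_eq_abs, ← Complex.norm_real]; push_cast; rfl

lemma summable_bco {v : ℝ} (hv : 0 < v) : Summable (bco v) := by
  have h := (hasSum_eta (τ := v * I) (by simpa using hv)).summable.norm
  refine h.congr fun m => ?_
  rw [norm_bco]; simp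

lemma sq_half_ge (m : ℤ) : (1/4 : ℝ) ≤ ((m:ℝ)+1/2)^2 := by
  have : (0:ℝ) ≤ (m:ℝ) * (m+1) := by
    have : (0:ℤ) ≤ m * (m+1) := by
      rcases le_or_gt 0 m with h | h
      · positivity
      · nlinarith
    exact_mod_cast this
  nlinarith

lemma bco_mono {v w : ℝ} (h : v ≤ w) (m : ℤ) : bco w m ≤ Real.exp (-(Real.pi * (w - v) / 4)) * bco v m := by
  unfold bco
  rw [mul_left_comm, ← Real.exp_add]
  gcongr
  have := sq_half_ge m
  have h1 : 0 ≤ Real.pi * (w - v) := mul_nonneg Real.pi_pos.le (sub_nonneg.2 h)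
  nlinarith

lemma differentiableOn_eta3 : DifferentiableOn ℂ eta3 {z | 0 < z.im} := by
  intro z hz
  apply DifferentiableAt.differentiableWithinAt
  have hz' : 0 < z.im := hz
  have hU : IsOpen {w : ℂ | z.im / 2 < w.im} := isOpen_lt continuous_const Complex.continuous_im
  have h := differentiableOn_tsum_of_summable_norm (F := fun (m : ℤ) (w : ℂ) => ((m : ℂ) + 1/2) * aco w m)
    (summable_bco (v := z.im/2) (by linarith)) (fun m => ?_) hU (fun m w hw => ?_)
  · have h2 := (h.differentiableAt (hU.mem_nhds (show z.im/2 < z.im by linarith))).const_mul (-I)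
    exact h2
  · unfold aco e
    fun_prop
  · rw [norm_bco]
    have hw' : z.im / 2 ≤ w.im := le_of_lt hw
    refine (bco_mono hw' m).trans ?_
    have : 0 ≤ bco (z.im/2) m := by unfold bco; positivity
    apply mul_le_of_le_one_left this
    apply Real.exp_le_one_iff.2
    have h1 : 0 ≤ Real.pi * (w.im - z.im/2) := mul_nonneg Real.pi_pos.le (sub_nonneg.2 hw')
    linarith

lemma norm_eta3_le {τ : ℂ} (hτ : 1 ≤ τ.im) :
    ‖eta3 τ‖ ≤ Real.exp (-(Real.pi * (τ.im - 1) / 4)) * ∑' m, bco 1 m := by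
  have h0 : 0 < τ.im := by linarith
  have h1 : ‖eta3 τ‖ = ‖I * eta3 τ‖ := by simp
  rw [h1, ← tsum_mul_left]
  refine (hasSum_eta h0).norm_le_of_bounded ((summable_bco one_pos).mul_left _).hasSum (fun m => ?_)
  rw [norm_bco]
  exact bco_mono hτ m

lemma e_one : e 1 = 1 := by unfold e; rw [mul_one, Complex.exp_two_pi_mul_I]

lemma e_int (m : ℤ) : e m = 1 := by
  unfold e; rw [mul_comm]; exact Complex.exp_int_mul_two_pi_mul_I m

lemma aco_add_one (τ : ℂ) (m : ℤ) : aco (τ + 1) m = e (1/8) * aco τ m := by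
  unfold aco
  obtain ⟨k, hk⟩ := Int.even_mul_succ_self m
  have hk' : (m:ℂ) * (m + 1) = k + k := by exact_mod_cast congrArg (Int.cast : ℤ → ℂ) hk
  rw [show ((m:ℂ) + 1 / 2) ^ 2 / 2 * (τ + 1) + (m + 1 / 2) / 2 = (k:ℤ) + (1/8 + (((m:ℂ) + 1 / 2) ^ 2 / 2 * τ + (m + 1 / 2) / 2)) by
    linear_combination hk'/2, e_add, e_int, e_add, one_mul]

lemma eta3_add_one (τ : ℂ) : eta3 (τ + 1) = e (1/8) * eta3 τ := by
  have : ∀ τ, eta3 τ = -I * ∑' m : ℤ, ((m : ℂ) + 1/2) * aco τ m := fun τ => rfl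
  rw [this, this]
  simp_rw [aco_add_one, mul_left_comm _ (e (1/8)), tsum_mul_left]
  ring

lemma e_pow (a : ℂ) (n : ℕ) : e a ^ n = e (n * a) := by
  unfold e; rw [← Complex.exp_nat_mul]; congr 1; ring

lemma sqrt_sq' {τ : ℂ} (hτ : 0 < τ.im) : ((-I * τ) ^ (1 / 2 : ℂ))^2 = -I * τ := by
  rw [one_div]
  exact_mod_cast Complex.cpow_nat_inv_pow (-I * τ) two_ne_zero

lemma eta3_S {τ : ℂ} (hτ : 0 < τ.im) : eta3 (-1/τ) ^ 8 = τ ^ 12 * eta3 τ ^ 8 := by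
  have h := eta3_fe hτ
  have h2 := sqrt_sq' hτ
  have h0 := tau_ne hτ
  have hr : (-I * τ) ^ (1 / 2 : ℂ) ≠ 0 := by
    intro hh; rw [hh] at h2
    have : -I * τ ≠ 0 := by simp [h0]
    apply this; rw [← h2]; simp
  generalize (-I * τ) ^ (1 / 2 : ℂ) = r at *
  have h3 : eta3 (-1/τ) = -I * r * τ * eta3 τ := by
    rw [h]; field_simp; rw [I_sq]; ring
  rw [h3]
  have h4 : (-I * r * τ * eta3 τ)^8 = (I^2)^4 * (r^2)^4 * τ^8 * eta3 τ^8 := by ring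
  rw [h4, h2, I_sq]
  have : (-I * τ)^4 = (I^2)^2 * τ^4 := by ring
  rw [this, I_sq]; ring

lemma eta3_T (τ : ℂ) : eta3 (τ + 1) ^ 8 = eta3 τ ^ 8 := by
  rw [eta3_add_one, mul_pow, e_pow]
  norm_num [e_one]

lemma aco_neg (τ : ℂ) (m : ℤ) : aco τ (-(m + 1)) = - aco τ m := by
  unfold aco
  have h1 : e (-1/2) = -1 := by
    unfold e
    rw [show 2 * (Real.pi:ℂ) * I * (-1/2) = -(Real.pi * I) by ring, Complex.exp_neg, Complex.exp_pi_mul_I]; norm_num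
  have : (((-(m+1):ℤ):ℂ) + 1 / 2) ^ 2 / 2 * τ + (((-(m+1):ℤ):ℂ) + 1 / 2) / 2 =
    ((-m : ℤ):ℂ) + (-1/2 + (((m:ℂ) + 1 / 2) ^ 2 / 2 * τ + (m + 1 / 2) / 2)) := by push_cast; ring
  rw [this, e_add, e_int, e_add, h1]; ring

lemma hasSum_eta_nat {τ : ℂ} (hτ : 0 < τ.im) :
    HasSum (fun n : ℕ => 2 * (((n : ℂ) + 1/2) * aco τ n)) (I * eta3 τ) := by
  have h := (hasSum_eta hτ).nat_add_neg_add_one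
  convert h using 1
  funext n
  have := aco_neg τ n
  rw [this]; push_cast; ring

lemma hasSum_thT_nat {τ : ℂ} (hτ : 0 < τ.im) (z : ℂ) :
    HasSum (fun n : ℕ => aco τ n * (e (((n : ℂ) + 1/2) * z) - e (-(((n : ℂ) + 1/2) * z)))) (thT τ z) := by
  have h := (hasSum_thT hτ z).nat_add_neg_add_one
  convert h using 1
  funext n
  have := aco_neg τ n
  rw [this]; push_cast
  rw [show (-((n:ℂ)+1)+1/2) * z = -(((n : ℂ) + 1/2) * z) by ring]
  ring

lemma exists_eta3_ne_zero : ∃ τ : ℂ, 0 < τ.im ∧ eta3 τ ≠ 0 := by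
  have key : Filter.Tendsto (fun v : ℝ => ∑' n : ℕ, (Real.exp (Real.pi * v / 4) : ℂ) * (2 * (((n : ℂ) + 1/2) * aco (v * I) n)))
      Filter.atTop (nhds (∑' n : ℕ, if n = 0 then I else 0)) := by
    refine tendsto_tsum_of_dominated_convergence (bound := fun n : ℕ => 2 * Real.exp (Real.pi/4) * bco 1 (n:ℤ)) ?_ ?_ ?_
    · exact (((summable_bco one_pos).comp_injective Nat.cast_injective).mul_left _)
    · intro n
      have hform : ∀ v : ℝ, (Real.exp (Real.pi * v / 4) : ℂ) * (2 * (((n : ℂ) + 1/2) * aco (v * I) n)) =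
          2 * ((n:ℂ)+1/2) * e (((n : ℂ) + 1/2)/2) * (Real.exp (-(Real.pi * v * (n * (n+1)))) : ℂ) := by
        intro v
        unfold aco
        rw [e_add]
        have : (Real.exp (Real.pi * v / 4) : ℂ) * e ((((n:ℤ):ℂ) + 1 / 2) ^ 2 / 2 * (v * I)) = (Real.exp (-(Real.pi * v * (n * (n+1)))) : ℂ) := by
          unfold e
          rw [Complex.ofReal_exp, Complex.ofReal_exp, ← Complex.exp_add]
          congr 1
          push_cast
          linear_combination (Real.pi * v * ((n:ℂ) + 1 / 2) ^ 2) * I_sq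
        rw [← this]; push_cast; ring
      simp_rw [hform]
      by_cases hn : n = 0
      · subst hn
        simp only [if_true]
        have : e (1/4) = I := by
          unfold e
          rw [show 2 * (Real.pi:ℂ) * I * (1/4) = ((Real.pi/2 : ℝ):ℂ) * I by push_cast; ring, Complex.exp_mul_I,
            ← Complex.ofReal_cos, ← Complex.ofReal_sin, Real.cos_pi_div_two, Real.sin_pi_div_two]
          simp
        have h2 : ((0:ℕ):ℂ) + 1/2 = 1/2 := by simp
        rw [h2, show (1/2:ℂ)/2 = 1/4 by norm_num, this]
        simp
      · simp only [hn, if_false]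
        have h1 : Filter.Tendsto (fun v : ℝ => Real.exp (-(Real.pi * v * (n * (n+1))))) Filter.atTop (nhds 0) := by
          apply Real.tendsto_exp_neg_atTop_nhds_zero.comp
          have hp : 0 < Real.pi * ((n:ℝ) * (n+1)) := by
            have : 0 < (n:ℝ) := by positivity
            positivity
          refine (Filter.tendsto_id.const_mul_atTop hp).congr fun v => ?_
          simp; ring
        have h2 := ((Complex.continuous_ofReal.tendsto 0).comp h1).const_mul (2 * ((n:ℂ)+1/2) * e (((n : ℂ) + 1/2)/2))
        simpa using h2
    · filter_upwards [Filter.eventually_ge_atTop 1] with v hv n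
      have h1 := bco_mono hv (n:ℤ)
      have h2 := norm_bco (v * I) (n:ℤ)
      have h3 : ((v:ℂ) * I).im = v := by simp
      rw [h3] at h2
      rw [norm_mul, norm_mul, show ((n:ℂ)) = ((n:ℤ):ℂ) by simp, h2, Complex.norm_real, Real.norm_eq_abs, Real.abs_exp, Complex.norm_ofNat]
      calc Real.exp (Real.pi * v / 4) * (2 * bco v n) ≤ Real.exp (Real.pi * v / 4) * (2 * (Real.exp (-(Real.pi * (v - 1) / 4)) * bco 1 n)) := by gcongr
        _ = 2 * (Real.exp (Real.pi * v / 4) * Real.exp (-(Real.pi * (v - 1) / 4))) * bco 1 n := by ring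
        _ = _ := by rw [← Real.exp_add]; ring_nf
  rw [tsum_ite_eq] at key
  have h1 := key.eventually_ne I_ne_zero
  obtain ⟨v, hv, hv0⟩ := (h1.and (Filter.eventually_gt_atTop 0)).exists
  refine ⟨v * I, by simpa using hv0, fun h => hv ?_⟩
  rw [tsum_mul_left, (hasSum_eta_nat (τ := v * I) (by simpa using hv0)).tsum_eq, h]
  simp

section eta3nz
open UpperHalfPlane hiding I
open SlashInvariantForm MatrixGroups Filter ModularForm

/-- eighth power of eta3 on the half plane -/
noncomputable def eta8 (z : ℍ) : ℂ := eta3 z ^ 8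

lemma eta8_T : (eta8 ∣[(12 : ℤ)] ModularGroup.T) = eta8 := by
  ext z
  rw [SL_slash_apply, UpperHalfPlane.modular_T_smul]
  have := eta3_T z
  have hd : denom ((ModularGroup.T : SL(2, ℤ)) : GL (Fin 2) ℝ) z = 1 := by
    simp [denom, ModularGroup.coe_T]
  rw [hd]
  simp only [eta8, one_zpow, mul_one]
  rw [← this]
  congr 2
  simp [add_comm]

lemma eta8_S : (eta8 ∣[(12 : ℤ)] ModularGroup.S) = eta8 := by
  ext z
  have h1 := eta3_S z.2
  have hz : (z:ℂ) ≠ 0 := UpperHalfPlane.ne_zero z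
  suffices eta3 (-(↑z)⁻¹) ^ 8 * ((z : ℂ) ^ 12)⁻¹ = eta3 z ^ 8 by
    rw [SL_slash_apply, UpperHalfPlane.modular_S_smul]
    have hd : denom ((ModularGroup.S : SL(2, ℤ)) : GL (Fin 2) ℝ) z = z := by
      simp [denom, ModularGroup.coe_S]
    rw [hd]
    simpa [eta8] using this
  rw [show (-(z:ℂ)⁻¹) = -1/z by rw [neg_div, one_div], show eta3 (-1/(z:ℂ))^8 = _ from h1]
  have h2 : (z:ℂ)^12 ≠ 0 := pow_ne_zero _ hz
  change (z:ℂ)^12 * eta3 z ^ 8 * _ = _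
  field_simp

lemma eta8_zero : IsZeroAtImInfty eta8 := by
  unfold IsZeroAtImInfty Filter.ZeroAtFilter
  have h1 : Tendsto (fun z : ℍ => eta3 z) atImInfty (nhds 0) := by
    rw [tendsto_zero_iff_norm_tendsto_zero]
    have h2 : Tendsto (fun v : ℝ => Real.exp (-(Real.pi * (v - 1) / 4)) * ∑' m, bco 1 m) atTop (nhds 0) := by
      have h3 : Tendsto (fun v : ℝ => Real.pi * (v - 1) / 4) atTop atTop :=
        ((tendsto_atTop_add_const_right _ (-1) tendsto_id).const_mul_atTop Real.pi_pos).atTop_div_const (by norm_num)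
      simpa using (Real.tendsto_exp_neg_atTop_nhds_zero.comp h3).mul_const (∑' m, bco 1 m)
    have h4 : Tendsto UpperHalfPlane.im atImInfty atTop := tendsto_comap
    refine squeeze_zero' (.of_forall fun _ => norm_nonneg _) ?_ (h2.comp h4)
    filter_upwards [h4.eventually_ge_atTop 1] with z hz
    exact norm_eta3_le hz
  have := h1.pow 8
  rw [zero_pow (by norm_num)] at this
  exact this

noncomputable def eta8Form : CuspForm 𝒮ℒ 12 where
  toFun := eta8
  slash_action_eq' A hA := by
    obtain ⟨A, rfl⟩ := hA
    exact slash_action_generators_SL2Z eta8_S eta8_T A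
  holo' := by
    rw [UpperHalfPlane.mdifferentiable_iff]
    refine .congr (f := fun z => eta3 z ^ 8) (differentiableOn_eta3.pow 8) fun z hz ↦ ?_
    simp [eta8, ofComplex_apply_of_im_pos hz]
  zero_at_cusps' hc := by
    rw [Subgroup.IsArithmetic.isCusp_iff_isCusp_SL2Z] at hc
    rw [OnePoint.isZeroAt_iff_forall_SL2Z hc]
    intro γ _
    rw [slash_action_generators_SL2Z eta8_S eta8_T]
    exact eta8_zero

lemma eta3_ne_zero {τ : ℂ} (hτ : 0 < τ.im) : eta3 τ ≠ 0 := by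
  obtain ⟨c, hc⟩ := CuspForm.exists_smul_discriminant_of_weight_eq_twelve eta8Form
  have h : ∀ z : ℍ, c * ModularForm.discriminant z = eta3 z ^ 8 := fun z => by
    have := DFunLike.congr_fun hc z
    exact this
  obtain ⟨t, ht, ht0⟩ := exists_eta3_ne_zero
  have hc0 : c ≠ 0 := by
    rintro rfl
    have := h ⟨t, ht⟩
    rw [zero_mul] at this
    exact pow_ne_zero 8 ht0 this.symm
  intro h0
  have := h ⟨τ, hτ⟩
  change _ = eta3 τ ^ 8 at this
  rw [h0] at this
  simp [hc0] at this
  exact discriminant_ne_zero _ this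
end eta3nz

lemma integrable_of_hasSum {F : ℕ → ℝ → ℂ} {f : ℝ → ℂ} (hF : ∀ n, Integrable (F n))
    (hs : Summable fun n => ∫ x, ‖F n x‖) (hf : ∀ x, HasSum (fun n => F n x) (f x)) : Integrable f := by
  refine ⟨?_, ?_⟩
  · refine aestronglyMeasurable_of_tendsto_ae Filter.atTop (f := fun n x => ∑ i ∈ Finset.range n, F i x) (fun n => ?_)
      (.of_forall fun x => (hf x).tendsto_sum_nat)
    exact (integrable_finsetSum _ fun i _ => hF i).1
  · have h1 : ∀ x, ‖f x‖ₑ ≤ ∑' n, ‖F n x‖ₑ := fun x => by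
      rw [← (hf x).tsum_eq]; exact enorm_tsum_le_tsum_enorm
    refine (lintegral_mono h1).trans_lt ?_
    rw [lintegral_tsum (fun n => (hF n).1.enorm)]
    simp_rw [← ofReal_integral_norm_eq_lintegral_enorm (hF _)]
    exact hs.tsum_ofReal_lt_top

/-- model kernel -/
noncomputable def Fk (a t : ℝ) : ℝ := max t 0 * Real.exp (-(a * t))

lemma Fk_nonneg (a t : ℝ) : 0 ≤ Fk a t := by unfold Fk; positivity

lemma Fk_one_integrable : Integrable (Fk 1) := by
  have h := Real.GammaIntegral_convergent (s := 2) (by norm_num)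
  have h2 := (integrable_indicator_iff measurableSet_Ioi).2 h
  refine h2.congr (.of_forall fun t => ?_)
  simp only [Set.indicator, Set.mem_Ioi, Fk]
  split_ifs with ht
  · rw [max_eq_left ht.le]; norm_num; ring
  · rw [max_eq_right (not_lt.1 ht)]; simp

lemma Fk_eq {a : ℝ} (ha : 0 < a) (t : ℝ) : Fk a t = a⁻¹ * Fk 1 (a * t) := by
  unfold Fk
  have : max (a * t) 0 = a * max t 0 := by
    rw [mul_max_of_nonneg _ _ ha.le, mul_zero]
  rw [this]; field_simp

lemma Fk_integrable {a : ℝ} (ha : 0 < a) : Integrable (Fk a) := by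
  rw [show Fk a = _ from funext (Fk_eq ha)]
  exact (Fk_one_integrable.comp_mul_left' ha.ne').const_mul _

lemma Fk_integral {a : ℝ} (ha : 0 < a) : ∫ t, Fk a t = (∫ t, Fk 1 t) * (a⁻¹)^2 := by
  simp_rw [Fk_eq ha]
  rw [integral_const_mul, Measure.integral_comp_mul_left, abs_of_pos (inv_pos.2 ha), smul_eq_mul]
  ring

/-- term of gplus -/
noncomputable def Tn (τ : ℂ) (n : ℕ) (x : ℝ) : ℂ :=
  e (-(x : ℂ)^2 * τ / 2) * ((Real.sign x : ℂ) / (Complex.I * eta3 τ)) *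
    (((max ((n:ℝ) + 1/2 - |x|) 0 : ℝ) : ℂ) * aco τ n)

lemma summable_max {τ : ℂ} (hτ : 0 < τ.im) (x : ℝ) :
    Summable fun n : ℕ => (((max ((n:ℝ) + 1/2 - |x|) 0 : ℝ) : ℂ) * aco τ n) := by
  refine Summable.of_norm_bounded ((summable_bco hτ).comp_injective Nat.cast_injective) fun n => ?_
  simp only [Function.comp]
  rw [norm_mul, norm_aco, bco, Complex.norm_real, Real.norm_eq_abs, abs_of_nonneg (le_max_right _ _)]
  have h0 : |((n:ℤ):ℝ)+1/2| = (n:ℝ)+1/2 := by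
    rw [abs_of_nonneg (by positivity)]; push_cast; rfl
  rw [h0]
  refine mul_le_mul_of_nonneg_right ?_ (Real.exp_nonneg _)
  apply max_le
  · linarith [abs_nonneg x]
  · positivity

lemma gplus_tsum (τ : ℂ) (x : ℝ) : (∑' m : ℤ, if |x| < (m : ℝ) + 1/2 then
      (((m : ℝ) + 1/2 - |x| : ℝ) : ℂ) * e (((m : ℂ) + 1/2)^2 / 2 * τ + ((m : ℂ) + 1/2) / 2)
    else 0) = ∑' n : ℕ, (((max ((n:ℝ) + 1/2 - |x|) 0 : ℝ) : ℂ) * aco τ n) := by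
  rw [← (Nat.cast_injective (R := ℤ)).tsum_eq]
  · refine tsum_congr fun n => ?_
    split_ifs with h
    · push_cast at h
      rw [max_eq_left (by linarith)]; rfl
    · push_cast at h
      rw [max_eq_right (by linarith)]; simp
  · intro m hm
    simp only [Function.mem_support, ne_eq, ite_eq_right_iff, Classical.not_imp] at hm
    have h1 := hm.1
    have h2 : (-1:ℝ) < m := by linarith [abs_nonneg x]
    have h3 : (-1:ℤ) < m := by exact_mod_cast h2
    exact ⟨m.toNat, by simp; omega⟩

lemma gplus_hasSum {τ : ℂ} (hτ : 0 < τ.im) (x : ℝ) : HasSum (fun n => Tn τ n x) (gplus τ x) := by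
  unfold gplus Tn
  rw [gplus_tsum]
  exact (summable_max hτ x).hasSum.mul_left _

lemma continuous_e : Continuous e := by unfold e; fun_prop

lemma measurable_sign' : Measurable Real.sign := by
  unfold Real.sign
  refine Measurable.ite measurableSet_Iio measurable_const (Measurable.ite measurableSet_Ioi measurable_const measurable_const)

lemma norm_sign_le (x : ℝ) : ‖(Real.sign x : ℂ)‖ ≤ 1 := by
  rcases Real.sign_apply_eq x with h | h | h <;> simp [h]

lemma norm_e_neg (τ : ℂ) (x : ℝ) : ‖e (-(x : ℂ)^2 * τ / 2)‖ = Real.exp (Real.pi * τ.im * x^2) := by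
  rw [norm_e]; congr 1
  rw [show -(x : ℂ)^2 * τ / 2 = ((-x^2/2 : ℝ):ℂ) * τ by push_cast; ring, Complex.im_ofReal_mul]; ring

lemma Tn_bound {τ : ℂ} (hτ : 0 < τ.im) (n : ℕ) (x : ℝ) : ‖Tn τ n x‖ ≤
    ‖I * eta3 τ‖⁻¹ * (Fk (Real.pi * τ.im * (n+1/2)) (n+1/2 - x) + Fk (Real.pi * τ.im * (n+1/2)) (n+1/2 + x)) := by
  have h1 : max ((n:ℝ) + 1/2 - |x|) 0 * Real.exp (Real.pi * τ.im * x^2) * Real.exp (-(Real.pi * τ.im * ((n:ℝ)+1/2)^2)) ≤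
      Fk (Real.pi * τ.im * (n+1/2)) (n+1/2 - |x|) := by
    unfold Fk
    rw [mul_assoc, ← Real.exp_add]
    rcases le_or_gt ((n:ℝ) + 1/2 - |x|) 0 with h | h
    · rw [max_eq_right h]; simp
    · gcongr
      have hp : 0 < Real.pi * τ.im := mul_pos Real.pi_pos hτ
      rw [← sq_abs x]
      have h2 : 0 ≤ |x| * ((n:ℝ) + 1/2 - |x|) := mul_nonneg (abs_nonneg x) h.le
      nlinarith
  have h2 : Fk (Real.pi * τ.im * (n+1/2)) (n+1/2 - |x|) ≤
      Fk (Real.pi * τ.im * (n+1/2)) (n+1/2 - x) + Fk (Real.pi * τ.im * (n+1/2)) (n+1/2 + x) := by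
    rcases abs_cases x with h | h
    · rw [h.1]; linarith [Fk_nonneg (Real.pi * τ.im * (n+1/2)) (n+1/2 + x)]
    · rw [h.1, sub_neg_eq_add]; linarith [Fk_nonneg (Real.pi * τ.im * (n+1/2)) (n+1/2 - x)]
  refine le_trans ?_ (mul_le_mul_of_nonneg_left (h1.trans h2) (by positivity))
  unfold Tn
  rw [norm_mul, norm_mul, norm_mul, norm_e_neg, norm_div, norm_aco, Complex.norm_real (max ((n:ℝ)+1/2-|x|) 0), Real.norm_eq_abs (max ((n:ℝ)+1/2-|x|) 0), abs_of_nonneg (le_max_right ((n:ℝ)+1/2-|x|) 0)]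
  have := norm_sign_le x
  push_cast
  calc _ ≤ Real.exp (Real.pi * τ.im * x^2) * (1 / ‖I * eta3 τ‖) * (max ((n:ℝ) + 1/2 - |x|) 0 * Real.exp (-(Real.pi * τ.im * ((n:ℝ)+1/2)^2))) := by gcongr
    _ = _ := by ring

lemma Tn_measurable (τ : ℂ) (n : ℕ) : Measurable (Tn τ n) := by
  unfold Tn
  refine (Measurable.mul ?_ ?_).mul ?_
  · exact (continuous_e.comp (by fun_prop)).measurable
  · exact (Complex.measurable_ofReal.comp measurable_sign').div_const _
  · exact (Continuous.measurable (by fun_prop))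

lemma Tn_bound_integrable {τ : ℂ} (hτ : 0 < τ.im) (n : ℕ) : Integrable fun x : ℝ =>
    ‖I * eta3 τ‖⁻¹ * (Fk (Real.pi * τ.im * (n+1/2)) (n+1/2 - x) + Fk (Real.pi * τ.im * (n+1/2)) (n+1/2 + x)) := by
  have hp : 0 < Real.pi * τ.im * (n+1/2) := by have := Real.pi_pos; positivity
  exact (((Fk_integrable hp).comp_sub_left _).add ((Fk_integrable hp).comp_add_left _)).const_mul _

lemma Tn_integrable {τ : ℂ} (hτ : 0 < τ.im) (n : ℕ) : Integrable (Tn τ n) :=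
  (Tn_bound_integrable hτ n).mono' (Tn_measurable τ n).aestronglyMeasurable (.of_forall (Tn_bound hτ n))

lemma Tn_summable {τ : ℂ} (hτ : 0 < τ.im) : Summable fun n => ∫ x, ‖Tn τ n x‖ := by
  have hs : Summable fun n : ℕ => ‖I * eta3 τ‖⁻¹ * (2 * ((∫ t, Fk 1 t) * ((Real.pi * τ.im * (n+1/2))⁻¹)^2)) := by
    refine Summable.mul_left _ (Summable.mul_left _ (Summable.mul_left _ ?_))
    have h := ((Real.summable_nat_pow_inv (p := 2)).2 (by norm_num))
    have h2 := (((summable_nat_add_iff 1).2 h).mul_left (4 * ((Real.pi * τ.im)⁻¹)^2))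
    refine Summable.of_nonneg_of_le (fun n => by positivity) (fun n => ?_) h2
    have hp : 0 < Real.pi * τ.im := by have := Real.pi_pos; positivity
    rw [mul_inv, mul_pow, mul_comm 4, mul_assoc]
    gcongr
    push_cast
    rw [inv_pow, ← div_eq_mul_inv, le_div_iff₀ (by positivity), inv_mul_le_iff₀ (by positivity)]
    nlinarith [(Nat.cast_nonneg n : (0:ℝ) ≤ n)]
  refine Summable.of_nonneg_of_le (fun n => by positivity) (fun n => ?_) hs
  have hp : 0 < Real.pi * τ.im * (n+1/2) := by have := Real.pi_pos; positivity
  refine (integral_mono (Tn_integrable hτ n).norm (Tn_bound_integrable hτ n) (Tn_bound hτ n)).trans (le_of_eq ?_)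
  rw [integral_const_mul, integral_add ((Fk_integrable hp).comp_sub_left _) ((Fk_integrable hp).comp_add_left _),
    integral_sub_left_eq_self (Fk (Real.pi * τ.im * (n+1/2))), integral_add_left_eq_self (Fk (Real.pi * τ.im * (n+1/2))), Fk_integral hp]
  ring

lemma gplus_integrable {τ : ℂ} (hτ : 0 < τ.im) : Integrable (gplus τ) :=
  integrable_of_hasSum (Tn_integrable hτ) (Tn_summable hτ) (gplus_hasSum hτ)

/-- gaussian twist -/
noncomputable def tw (τ z : ℂ) (w : ℝ) : ℂ := e ((w:ℂ)^2 * τ / 2 + w * z)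

lemma tw_continuous (τ z : ℂ) : Continuous (tw τ z) := by
  unfold tw; exact continuous_e.comp (by fun_prop)

lemma tw_bound {τ : ℂ} (hτ : 0 < τ.im) (z : ℂ) (w : ℝ) : ‖tw τ z w‖ ≤ Real.exp (Real.pi * z.im^2 / τ.im) := by
  unfold tw
  rw [norm_e, show (w : ℂ)^2 * τ / 2 + w * z = ((w^2/2 : ℝ):ℂ) * τ + (w:ℝ) * z by push_cast; ring, Complex.add_im,
    Complex.im_ofReal_mul, Complex.im_ofReal_mul]
  gcongr
  rw [le_div_iff₀ hτ]
  have := mul_nonneg Real.pi_pos.le (sq_nonneg (w * τ.im + z.im))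
  nlinarith

lemma int_tent (z : ℂ) {M : ℝ} (hM : 0 < M) :
    (2 * Real.pi * I * z)^2 * ∫ w : ℝ, (Real.sign w : ℂ) * ((max (M - |w|) 0 : ℝ) : ℂ) * e (w * z) =
      e (M * z) - e (-(M * z)) - 2 * M * (2 * Real.pi * I * z) := by
  set k := 2 * Real.pi * I * z with hk
  have he : ∀ w : ℂ, e (w * z) = cexp (k * w) := fun w => by unfold e; rw [hk]; congr 1; ring
  rw [← neg_mul, he, he]
  simp_rw [he]
  have hsup : Function.support (fun w : ℝ => (Real.sign w : ℂ) * ((max (M - |w|) 0 : ℝ) : ℂ) * cexp (k * w)) ⊆ Set.Ioc (-M) M := by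
    intro w hw
    simp only [Function.mem_support] at hw
    by_contra hc
    apply hw
    have : M - |w| ≤ 0 := by
      rw [Set.mem_Ioc, not_and_or] at hc
      rcases hc with hc | hc
      · linarith [neg_le_abs w]
      · linarith [le_abs_self w]
    rw [max_eq_right this]; simp
  rw [← intervalIntegral.integral_eq_integral_of_support_subset hsup]
  have hI1 : ∫ w in (0:ℝ)..M, k^2 * ((M - w) * cexp (k * w)) = cexp (k * M) - (k * M + 1) := by
    have := intervalIntegral.integral_eq_sub_of_hasDerivAt (a := 0) (b := M) (f := fun w : ℝ => (k * (M - w) + 1) * cexp (k * w))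
      (f' := fun w : ℝ => k^2 * ((M - w) * cexp (k * w))) (fun w _ => ?_) (Continuous.intervalIntegrable (by fun_prop) _ _)
    · rw [this]; simp
    · have h1 : HasDerivAt (fun w : ℂ => (k * (M - w) + 1) * cexp (k * w)) (k^2 * ((M - w) * cexp (k * w))) (w:ℂ) := by
        have a1 : HasDerivAt (fun w : ℂ => k * (M - w) + 1) (k * (-1)) (w:ℂ) :=
          (((hasDerivAt_id _).const_sub _).const_mul k).add_const 1
        have a2 : HasDerivAt (fun w : ℂ => cexp (k * w)) (cexp (k * w) * (k * 1)) (w:ℂ) :=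
          ((hasDerivAt_id _).const_mul k).cexp
        refine (a1.mul a2).congr_deriv ?_
        ring
      exact h1.comp_ofReal
  have hI2 : ∫ w in (-M)..(0:ℝ), k^2 * (-(M + w) * cexp (k * w)) = - (k * M - 1) - cexp (k * -M) := by
    have := intervalIntegral.integral_eq_sub_of_hasDerivAt (a := -M) (b := 0) (f := fun w : ℝ => -(k * (M + w) - 1) * cexp (k * w))
      (f' := fun w : ℝ => k^2 * (-(M + w) * cexp (k * w))) (fun w _ => ?_) (Continuous.intervalIntegrable (by fun_prop) _ _)
    · rw [this]; simp
    · have h1 : HasDerivAt (fun w : ℂ => -(k * (M + w) - 1) * cexp (k * w)) (k^2 * (-(M + w) * cexp (k * w))) (w:ℂ) := by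
        have a1 : HasDerivAt (fun w : ℂ => -(k * (M + w) - 1)) (-(k * 1)) (w:ℂ) :=
          ((((hasDerivAt_id _).const_add _).const_mul k).sub_const 1).neg
        have a2 : HasDerivAt (fun w : ℂ => cexp (k * w)) (cexp (k * w) * (k * 1)) (w:ℂ) :=
          ((hasDerivAt_id _).const_mul k).cexp
        refine (a1.mul a2).congr_deriv ?_
        ring
      exact h1.comp_ofReal
  have e1 : ∀ w ∈ Set.uIoc (0:ℝ) M, k^2 * ((M - w) * cexp (k * w)) = k^2 * ((Real.sign w : ℂ) * ((max (M - |w|) 0 : ℝ) : ℂ) * cexp (k * w)) := by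
    intro w hw
    rw [Set.uIoc_of_le hM.le] at hw
    rw [Real.sign_of_pos hw.1, abs_of_pos hw.1, max_eq_left (by linarith [hw.2])]
    push_cast; ring
  have e2 : ∀ᵐ w : ℝ, w ∈ Set.uIoc (-M) 0 → k^2 * (-(M + w) * cexp (k * w)) = k^2 * ((Real.sign w : ℂ) * ((max (M - |w|) 0 : ℝ) : ℂ) * cexp (k * w)) := by
    have : ∀ᵐ w : ℝ, w ≠ 0 := by simp [ae_iff]
    filter_upwards [this] with w hw0 hw
    rw [Set.uIoc_of_le (by linarith)] at hw
    have hneg : w < 0 := lt_of_le_of_ne hw.2 hw0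
    rw [Real.sign_of_neg hneg, abs_of_neg hneg, max_eq_left (by linarith [hw.1])]
    push_cast; ring
  rw [intervalIntegral.integral_congr_ae (.of_forall e1)] at hI1
  rw [intervalIntegral.integral_congr_ae e2] at hI2
  have hii : ∀ a b : ℝ, IntervalIntegrable (fun w : ℝ => k^2 * ((Real.sign w : ℂ) * ((max (M - |w|) 0 : ℝ) : ℂ) * cexp (k * w))) volume a b := by
    intro a b
    have hc : IntervalIntegrable (fun w : ℝ => k^2 * (((max (M - |w|) 0 : ℝ) : ℂ) * cexp (k * w))) volume a b :=
      Continuous.intervalIntegrable (by fun_prop) _ _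
    refine hc.mono_fun ?_ (.of_forall fun w => ?_)
    · refine Measurable.aestronglyMeasurable (Measurable.const_mul (Measurable.mul (Measurable.mul ?_ ?_) ?_) _)
      · exact Complex.measurable_ofReal.comp measurable_sign'
      · exact Continuous.measurable (by fun_prop)
      · exact Continuous.measurable (by fun_prop)
    · beta_reduce
      rw [mul_assoc (Real.sign w : ℂ), norm_mul, norm_mul (Real.sign w : ℂ), norm_mul (k^2)]
      gcongr
      exact mul_le_of_le_one_left (norm_nonneg _) (norm_sign_le w)
  rw [← intervalIntegral.integral_const_mul, ← intervalIntegral.integral_add_adjacent_intervals (hii (-M) 0) (hii 0 M), hI1, hI2]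
  ring

lemma gplus_int {τ : ℂ} (hτ : 0 < τ.im) (z : ℂ) :
    (2 * Real.pi * I * z)^2 * ∫ w : ℝ, gplus τ w * tw τ z w =
      thT τ z / (I * eta3 τ) - 2 * Real.pi * I * z := by
  have hne : I * eta3 τ ≠ 0 := mul_ne_zero I_ne_zero (eta3_ne_zero hτ)
  have hint : ∀ n, Integrable fun w => Tn τ n w * tw τ z w := fun n =>
    (Tn_integrable hτ n).mul_bdd (c := Real.exp (Real.pi * z.im^2 / τ.im)) (tw_continuous τ z).aestronglyMeasurable
      (.of_forall (tw_bound hτ z))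
  have hsum : Summable fun n => ∫ w, ‖Tn τ n w * tw τ z w‖ := by
    refine Summable.of_nonneg_of_le (fun n => by positivity) (fun n => ?_)
      ((Tn_summable hτ).mul_right (Real.exp (Real.pi * z.im^2 / τ.im)))
    rw [← integral_mul_const]
    refine integral_mono (hint n).norm ((Tn_integrable hτ n).norm.mul_const _) fun w => ?_
    simp only [norm_mul]
    exact mul_le_mul_of_nonneg_left (tw_bound hτ z w) (norm_nonneg _)
  have h := hasSum_integral_of_summable_integral_norm hint hsum
  have h1 : ∀ w, (∑' n, Tn τ n w * tw τ z w) = gplus τ w * tw τ z w := fun w =>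
    ((gplus_hasSum hτ w).mul_right _).tsum_eq
  simp_rw [h1] at h
  have h2 := (h.mul_left ((2 * Real.pi * I * z)^2)).mul_left (I * eta3 τ)
  have h3 := (hasSum_thT_nat hτ z).sub ((hasSum_eta_nat hτ).mul_left (2 * Real.pi * I * z))
  have h3' : HasSum (fun i => I * eta3 τ * ((2 * Real.pi * I * z) ^ 2 * ∫ (a : ℝ), Tn τ i a * tw τ z a)) (thT τ z - 2 * Real.pi * I * z * (I * eta3 τ)) := by
    refine Eq.subst (motive := fun f => HasSum f (thT τ z - 2 * Real.pi * I * z * (I * eta3 τ))) (funext fun n => ?_) h3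
    symm
    have ht := int_tent z (M := (n:ℝ)+1/2) (by positivity)
    have hT : ∀ w, Tn τ n w * tw τ z w = (aco τ n / (I * eta3 τ)) * ((Real.sign w : ℂ) * ((max ((n:ℝ)+1/2 - |w|) 0 : ℝ) : ℂ) * e (w * z)) := by
      intro w
      unfold Tn tw
      rw [e_add]
      have : e (-(w : ℂ)^2 * τ / 2) * e ((w:ℂ)^2 * τ / 2) = 1 := by
        rw [← e_add]; unfold e; ring_nf; simp
      linear_combination ((Real.sign w : ℂ) / (Complex.I * eta3 τ)) *
    (((max ((n:ℝ) + 1/2 - |w|) 0 : ℝ) : ℂ) * aco τ n) * e (w * z) * this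
    simp_rw [hT]
    rw [integral_const_mul, mul_left_comm _ (aco τ n / (I * eta3 τ)), ht]
    push_cast
    have : ∀ X, I * eta3 τ * (aco τ n / (I * eta3 τ) * X) = aco τ n * X := fun X => by
      rw [← mul_assoc, mul_div_cancel₀ _ hne]
    rw [this]
    ring
  have h4 := h2.unique h3'
  apply mul_left_cancel₀ hne
  rw [h4, mul_sub, mul_div_cancel₀ _ hne]
  ring

lemma gauss_int : Integrable fun t : ℝ => Real.exp (-t^2) := by
  simpa using integrable_exp_neg_mul_sq (b := 1) one_pos

lemma hasDerivAt_erfc (x : ℝ) : HasDerivAt erfc (-(2 / Real.sqrt Real.pi * Real.exp (-x^2))) x := by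
  have h : ∀ y, erfc y = (2 / Real.sqrt Real.pi) * ((∫ t in Set.Ioi 0, Real.exp (-t^2)) - ∫ t in (0:ℝ)..y, Real.exp (-t^2)) := by
    intro y
    unfold erfc
    rw [← intervalIntegral.integral_Ioi_sub_Ioi' gauss_int.integrableOn gauss_int.integrableOn]
    ring
  rw [show erfc = _ from funext h, ← mul_neg]
  refine HasDerivAt.const_mul _ ?_
  have hc : Continuous fun t : ℝ => Real.exp (-t^2) := by fun_prop
  exact (hc.integral_hasStrictDerivAt 0 x).hasDerivAt.const_sub _

lemma continuous_erfc : Continuous erfc :=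
  continuous_iff_continuousAt.2 fun x => (hasDerivAt_erfc x).continuousAt

lemma erfc_nonneg (x : ℝ) : 0 ≤ erfc x := by
  unfold erfc
  exact mul_nonneg (by positivity) (integral_nonneg fun t => (Real.exp_nonneg _))

lemma erfc_le {x : ℝ} (hx : 0 ≤ x) : erfc x ≤ Real.exp (-x^2) := by
  have h := (measurePreserving_add_right volume x).setIntegral_preimage_emb
    (MeasurableEquiv.addRight x).measurableEmbedding (fun t => Real.exp (-t^2)) (Set.Ioi x)
  rw [Set.preimage_add_const_Ioi, sub_self] at h
  unfold erfc
  rw [← h]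
  have h1 : ∫ t in Set.Ioi (0:ℝ), Real.exp (-(t+x)^2) ≤ ∫ t in Set.Ioi (0:ℝ), Real.exp (-t^2) * Real.exp (-x^2) := by
    refine setIntegral_mono_on ?_ ?_ measurableSet_Ioi fun t ht => ?_
    · exact (gauss_int.comp_add_right x).integrableOn
    · exact (gauss_int.mul_const _).integrableOn
    · rw [← Real.exp_add]
      gcongr
      have : 0 ≤ t * x := mul_nonneg (le_of_lt ht) hx
      nlinarith
  have h2 : ∫ t in Set.Ioi (0:ℝ), Real.exp (-t^2) = Real.sqrt Real.pi / 2 := by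
    have := integral_gaussian_Ioi 1
    simpa using this
  rw [integral_mul_const, h2] at h1
  have hp : 0 < Real.sqrt Real.pi := Real.sqrt_pos.2 Real.pi_pos
  calc _ ≤ 2 / Real.sqrt Real.pi * (Real.sqrt Real.pi / 2 * Real.exp (-x^2)) := by gcongr
    _ = _ := by field_simp

lemma gstar_bound {τ : ℂ} (hτ : 0 < τ.im) (x : ℝ) : ‖gstar τ x‖ ≤ Real.exp (-(Real.pi * τ.im) * x^2) := by
  unfold gstar
  have hc : 0 ≤ 2 * Real.pi * τ.im := by have := Real.pi_pos; positivity
  rw [norm_mul, norm_mul, norm_e_neg, norm_div, Complex.norm_real (erfc _), Real.norm_eq_abs, abs_of_nonneg (erfc_nonneg _)]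
  have h1 := erfc_le (x := Real.sqrt (2 * Real.pi * τ.im) * |x|) (by positivity)
  rw [mul_pow, Real.sq_sqrt hc, sq_abs] at h1
  have h2 : ‖(Real.sign x : ℂ)‖ / ‖(2:ℂ)‖ ≤ 1 := by
    have := norm_sign_le x
    rw [Complex.norm_ofNat, div_le_one (by norm_num)]; linarith
  calc _ ≤ Real.exp (Real.pi * τ.im * x^2) * 1 * Real.exp (-(2 * Real.pi * τ.im * x^2)) := by
        have := erfc_nonneg (Real.sqrt (2 * Real.pi * τ.im) * |x|)
        gcongr
    _ = _ := by rw [mul_one, ← Real.exp_add]; congr 1; ring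

lemma gstar_measurable (τ : ℂ) : Measurable (gstar τ) := by
  unfold gstar
  refine (Measurable.mul ?_ ?_).mul ?_
  · exact (continuous_e.comp (by fun_prop)).measurable
  · exact (Complex.measurable_ofReal.comp measurable_sign').div_const _
  · have := continuous_erfc
    exact (Continuous.measurable (by fun_prop))

lemma gstar_integrable {τ : ℂ} (hτ : 0 < τ.im) : Integrable (gstar τ) :=
  (integrable_exp_neg_mul_sq (b := Real.pi * τ.im) (mul_pos Real.pi_pos hτ)).mono' (gstar_measurable τ).aestronglyMeasurable
    (.of_forall (gstar_bound hτ))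

lemma gfun_integrable {τ : ℂ} (hτ : 0 < τ.im) : Integrable (gfun τ) :=
  (gplus_integrable hτ).sub (gstar_integrable hτ)

lemma G_int {c : ℝ} (hc : 0 < c) (k : ℂ) : Integrable fun w : ℝ => (Real.exp (-(c*w)^2) : ℂ) * cexp (k * w) := by
  have := integrable_cexp_quadratic (b := (c:ℂ)^2) (by rw [← ofReal_pow, ofReal_re]; positivity) k 0
  refine this.congr (.of_forall fun w => ?_)
  beta_reduce
  push_cast
  rw [← Complex.exp_add]
  congr 1; ring

lemma G_val {c : ℝ} (hc : 0 < c) (k : ℂ) : ∫ w : ℝ, (Real.exp (-(c*w)^2) : ℂ) * cexp (k * w) = (Real.sqrt Real.pi / c : ℝ) * cexp (k^2/(4*c^2)) := by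
  have := integral_cexp_quadratic (b := -(c:ℂ)^2) (by rw [← ofReal_pow, neg_re, ofReal_re]; simp; positivity) k 0
  have e1 : ∀ w : ℝ, (Real.exp (-(c*w)^2) : ℂ) * cexp (k * w) = cexp (-(c:ℂ)^2 * w^2 + k * w + 0) := by
    intro w
    push_cast
    rw [← Complex.exp_add]
    congr 1; ring
  simp_rw [e1]
  rw [this]
  congr 1
  · have : (Real.pi : ℂ) / - -(c:ℂ)^2 = ((Real.pi / c^2 : ℝ) : ℂ) := by push_cast; ring
    have h2 : (1/2 : ℂ) = ((1/2 : ℝ) : ℂ) := by push_cast; ring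
    rw [this, h2, ← Complex.ofReal_cpow (by have := Real.pi_pos; positivity), ← Real.sqrt_eq_rpow, Real.sqrt_div Real.pi_pos.le, Real.sqrt_sq hc.le]
  · congr 1
    have : (c:ℂ) ≠ 0 := by exact_mod_cast hc.ne'
    field_simp
    ring

lemma erfc_int {c : ℝ} (hc : 0 < c) (k : ℂ) : IntegrableOn (fun w : ℝ => (erfc (c*w) : ℂ) * cexp (k * w)) (Set.Ioi 0) := by
  have := continuous_erfc
  refine (G_int hc k).norm.integrableOn.mono' (Continuous.aestronglyMeasurable (by fun_prop)) ?_
  refine (ae_restrict_iff' measurableSet_Ioi).2 (.of_forall fun w hw => ?_)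
  rw [norm_mul, norm_mul, Complex.norm_real, Complex.norm_real, Real.norm_eq_abs, Real.norm_eq_abs, abs_of_nonneg (erfc_nonneg _),
    abs_of_nonneg (Real.exp_nonneg _)]
  gcongr
  exact erfc_le (mul_nonneg hc.le (le_of_lt hw))

lemma erfc_main {c : ℝ} (hc : 0 < c) (k : ℂ) :
    k * ∫ w in Set.Ioi (0:ℝ), (erfc (c*w) : ℂ) * (cexp (k * w) - cexp (-k * w)) = 2 * (cexp (k^2/(4*c^2)) - 1) := by
  set P : ℝ → ℂ := fun w => (erfc (c*w) : ℂ) * (cexp (k * w) + cexp (-k * w) - 2)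
  set A : ℝ → ℂ := fun w => (erfc (c*w) : ℂ) * (cexp (k * w) - cexp (-k * w))
  set B : ℝ → ℂ := fun w => (Real.exp (-(c*w)^2) : ℂ) * (cexp (k * w) + cexp (-k * w) - 2)
  set q : ℂ := ((2 / Real.sqrt Real.pi * c : ℝ) : ℂ) with hq
  have hP : ∀ w : ℝ, HasDerivAt P (k * A w - q * B w) w := by
    intro w
    have h1 : HasDerivAt (fun w : ℝ => erfc (c*w)) (-(2 / Real.sqrt Real.pi * Real.exp (-(c*w)^2)) * (c * 1)) w :=
      (hasDerivAt_erfc (c*w)).comp w ((hasDerivAt_id w).const_mul c)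
    have h2 : ∀ k : ℂ, HasDerivAt (fun w : ℝ => cexp (k * w)) (cexp (k * w) * (k * 1)) w := fun k =>
      (((hasDerivAt_id (w:ℂ)).const_mul k).cexp).comp_ofReal
    refine (h1.ofReal_comp.mul (((h2 k).add (h2 (-k))).sub_const 2)).congr_deriv ?_
    simp only [A, B, hq, Pi.add_apply]
    push_cast
    ring
  have e0 : ∀ w : ℝ, cexp (0 * w) = 1 := fun w => by simp
  have hAi : IntegrableOn A (Set.Ioi 0) := by
    refine ((erfc_int hc k).sub (erfc_int hc (-k))).congr (.of_forall fun w => ?_)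
    simp only [A, Pi.sub_apply]; ring
  have hPi : IntegrableOn P (Set.Ioi 0) := by
    refine (((erfc_int hc k).add (erfc_int hc (-k))).sub ((erfc_int hc 0).const_mul 2)).congr (.of_forall fun w => ?_)
    simp only [P, Pi.sub_apply, Pi.add_apply, e0]; ring
  have hBi : Integrable B := by
    refine (((G_int hc k).add (G_int hc (-k))).sub ((G_int hc 0).const_mul 2)).congr (.of_forall fun w => ?_)
    simp only [B, Pi.sub_apply, Pi.add_apply, e0]; ring
  have hPi' : IntegrableOn (fun w => k * A w - q * B w) (Set.Ioi 0) :=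
    (hAi.const_mul k).sub (hBi.integrableOn.const_mul q)
  have ht := tendsto_zero_of_hasDerivAt_of_integrableOn_Ioi (fun w _ => hP w) hPi' hPi
  have hF := integral_Ioi_of_hasDerivAt_of_tendsto' (fun w _ => hP w) hPi' ht
  rw [integral_sub (hAi.const_mul k) (hBi.integrableOn.const_mul q), integral_const_mul, integral_const_mul] at hF
  have hP0 : P 0 = 0 := by simp only [P]; simp; norm_num
  rw [hP0] at hF
  have hBv : ∫ w, B w = 2 * ((Real.sqrt Real.pi / c : ℝ) * (cexp (k^2/(4*c^2)) - 1)) := by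
    have : ∀ w, B w = (Real.exp (-(c*w)^2) : ℂ) * cexp (k * w) + (Real.exp (-(c*w)^2) : ℂ) * cexp (-k * w) - 2 * ((Real.exp (-(c*w)^2) : ℂ) * cexp (0 * w)) := by
      intro w; simp only [B, e0]; ring
    simp_rw [this]
    have hadd : Integrable fun w : ℝ => (Real.exp (-(c*w)^2) : ℂ) * cexp (k * w) + (Real.exp (-(c*w)^2) : ℂ) * cexp (-k * w) :=
      (G_int hc k).add (G_int hc (-k))
    rw [integral_sub hadd ((G_int hc 0).const_mul 2), integral_add (G_int hc k) (G_int hc (-k)), integral_const_mul,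
      G_val hc, G_val hc, G_val hc]
    simp
    ring
  have hBe : ∫ w in Set.Iic (0:ℝ), B w = ∫ w in Set.Ioi (0:ℝ), B w := by
    have := integral_comp_neg_Ioi (0:ℝ) B
    rw [neg_zero] at this
    rw [← this]
    congr 1; funext w
    simp only [B]; push_cast; ring_nf
  have hB2 := intervalIntegral.integral_Iic_add_Ioi (hBi.integrableOn (s := Set.Iic 0)) (hBi.integrableOn (s := Set.Ioi 0))
  rw [hBe, hBv] at hB2
  have hp : (Real.sqrt Real.pi : ℂ) ≠ 0 := by exact_mod_cast (Real.sqrt_pos.2 Real.pi_pos).ne'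
  have hc' : (c:ℂ) ≠ 0 := by exact_mod_cast hc.ne'
  have hB3 : ∫ w in Set.Ioi (0:ℝ), B w = (Real.sqrt Real.pi / c : ℝ) * (cexp (k^2/(4*c^2)) - 1) := by
    linear_combination hB2 / 2
  rw [hB3] at hF
  have : q * ((Real.sqrt Real.pi / c : ℝ) * (cexp (k^2/(4*c^2)) - 1)) = 2 * (cexp (k^2/(4*c^2)) - 1) := by
    rw [hq]; push_cast; field_simp
  rw [this] at hF
  linear_combination hF

lemma gstar_int {τ : ℂ} (hτ : 0 < τ.im) (z : ℂ) :
    (2 * Real.pi * I * z) * ∫ w : ℝ, gstar τ w * tw τ z w = cexp (-(Real.pi * z^2 / (2 * τ.im))) - 1 := by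
  set k := 2 * Real.pi * I * z with hk
  have hc0 : 0 < 2 * Real.pi * τ.im := by have := Real.pi_pos; positivity
  set c := Real.sqrt (2 * Real.pi * τ.im) with hc
  have hcp : 0 < c := Real.sqrt_pos.2 hc0
  have hint : Integrable fun w => gstar τ w * tw τ z w :=
    (gstar_integrable hτ).mul_bdd (c := Real.exp (Real.pi * z.im^2 / τ.im)) (tw_continuous τ z).aestronglyMeasurable
      (.of_forall (tw_bound hτ z))
  have hv : ∀ w, gstar τ w * tw τ z w = (Real.sign w : ℂ) / 2 * (erfc (c * |w|)) * cexp (k * w) := by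
    intro w
    unfold gstar tw
    rw [e_add]
    have h1 : e (-(w : ℂ)^2 * τ / 2) * e ((w:ℂ)^2 * τ / 2) = 1 := by
      rw [← e_add]; unfold e; ring_nf; simp
    have h2 : e (w * z) = cexp (k * w) := by unfold e; rw [hk]; congr 1; ring
    rw [h2, ← hc]
    linear_combination ((Real.sign w : ℂ) / 2) * (erfc (c * |w|)) * cexp (k * w) * h1
  rw [← intervalIntegral.integral_Iic_add_Ioi (hint.integrableOn (s := Set.Iic 0)) (hint.integrableOn (s := Set.Ioi 0))]
  have hneg := integral_comp_neg_Ioi (0:ℝ) fun w => gstar τ w * tw τ z w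
  rw [neg_zero] at hneg
  have hint' : IntegrableOn (fun w => gstar τ (-w) * tw τ z (-w)) (Set.Ioi 0) := hint.comp_neg.integrableOn
  rw [← hneg, ← integral_add hint' hint.integrableOn]
  have : ∫ w in Set.Ioi (0:ℝ), (gstar τ (-w) * tw τ z (-w) + gstar τ w * tw τ z w) =
      ∫ w in Set.Ioi (0:ℝ), (1/2) * ((erfc (c*w) : ℂ) * (cexp (k * w) - cexp (-k * w))) := by
    refine setIntegral_congr_fun measurableSet_Ioi fun w hw => ?_
    have hw' : 0 < w := hw
    rw [hv, hv, Real.sign_of_pos hw', Real.sign_of_neg (neg_neg_of_pos hw'), abs_neg, abs_of_pos hw']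
    push_cast
    ring_nf
  rw [this, integral_const_mul]
  have hm := erfc_main hcp k
  have hcc : k^2/(4*(c:ℂ)^2) = -(Real.pi * z^2 / (2 * τ.im)) := by
    have h2 : (c:ℂ)^2 = 2 * Real.pi * τ.im := by
      rw [← ofReal_pow, hc, Real.sq_sqrt hc0.le]; push_cast; ring
    have hp : (Real.pi : ℂ) ≠ 0 := by exact_mod_cast Real.pi_pos.ne'
    have ht : (τ.im : ℂ) ≠ 0 := by exact_mod_cast hτ.ne'
    rw [h2, hk, mul_pow, mul_pow, I_sq]; field_simp; ring
  rw [hcc] at hm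
  linear_combination hm / 2

lemma J_formula {τ : ℂ} (hτ : 0 < τ.im) (z : ℂ) :
    (2 * Real.pi * I * z)^2 * ∫ w : ℝ, gfun τ w * tw τ z w =
      thT τ z / (I * eta3 τ) - 2 * Real.pi * I * z * cexp (-(Real.pi * z^2 / (2 * τ.im))) := by
  have h1 : Integrable fun w => gstar τ w * tw τ z w :=
    (gstar_integrable hτ).mul_bdd (c := Real.exp (Real.pi * z.im^2 / τ.im)) (tw_continuous τ z).aestronglyMeasurable
      (.of_forall (tw_bound hτ z))
  have h2 : Integrable fun w => gplus τ w * tw τ z w :=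
    (gplus_integrable hτ).mul_bdd (c := Real.exp (Real.pi * z.im^2 / τ.im)) (tw_continuous τ z).aestronglyMeasurable
      (.of_forall (tw_bound hτ z))
  unfold gfun
  simp_rw [sub_mul]
  rw [integral_sub h2 h1]
  linear_combination gplus_int hτ z - (2 * Real.pi * I * z) * gstar_int hτ z

lemma re_gauss {τ : ℂ} (hτ : 0 < τ.im) : (Real.pi * I * τ : ℂ).re < 0 := by
  have : (Real.pi * I * τ : ℂ).re = -(Real.pi * τ.im) := by simp [mul_assoc]
  rw [this]; have := mul_pos Real.pi_pos hτ; linarith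

lemma tw_eq (τ z : ℂ) (y : ℝ) : tw τ z y = cexp (Real.pi * I * τ * y^2 + 2 * Real.pi * I * z * y + 0) := by
  unfold tw e; congr 1; ring

lemma tw_integrable {τ : ℂ} (hτ : 0 < τ.im) (z : ℂ) : Integrable (tw τ z) := by
  rw [show tw τ z = _ from funext (tw_eq τ z)]
  exact integrable_cexp_quadratic' (re_gauss hτ) _ _

lemma tw_integral {τ : ℂ} (hτ : 0 < τ.im) (z : ℂ) :
    ∫ y, tw τ z y = 1 / (-I * τ) ^ (1/2 : ℂ) * e (z^2 * (-1/τ) / 2) := by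
  simp_rw [tw_eq]
  rw [integral_cexp_quadratic (re_gauss hτ)]
  have ht := tau_ne hτ
  have hp : (Real.pi : ℂ) ≠ 0 := by exact_mod_cast Real.pi_pos.ne'
  congr 1
  · have : (Real.pi : ℂ) / -(Real.pi * I * τ) = (-I * τ)⁻¹ := by field_simp
    rw [this, Complex.inv_cpow]
    · exact (one_div _).symm
    intro h
    rw [Complex.arg_eq_pi_iff] at h
    have h1 := h.1
    simp at h1
    linarith
  · unfold e
    congr 1
    field_simp
    ring

lemma gauss_match {τ : ℂ} (hτ : 0 < τ.im) (z : ℂ) :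
    e (z^2 * (-1/τ) / 2) * cexp (-(Real.pi * ((-1/τ) * z)^2 / (2 * (-1/τ).im))) = cexp (-(Real.pi * z^2 / (2 * τ.im))) := by
  have ht := tau_ne hτ
  have him : (-1/τ).im = τ.im / Complex.normSq τ := by
    rw [neg_div, one_div, Complex.neg_im, Complex.inv_im]; ring
  unfold e
  rw [← Complex.exp_add, him]
  congr 1
  have hn : (Complex.normSq τ : ℂ) = τ * (starRingEnd ℂ) τ := (Complex.mul_conj τ).symm
  have hv : (τ.im : ℂ) ≠ 0 := by exact_mod_cast hτ.ne'
  have hc : τ - (starRingEnd ℂ) τ = 2 * τ.im * I := by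
    rw [Complex.sub_conj]
    push_cast; ring
  have hc0 : (starRingEnd ℂ) τ ≠ 0 := by simpa using ht
  push_cast
  rw [hn]
  field_simp
  linear_combination (z^2) * hc

lemma key {τ : ℂ} (hτ : 0 < τ.im) {z : ℂ} (hz : z ≠ 0) :
    1 / (-I * τ) ^ (1/2 : ℂ) * e (z^2 * (-1/τ) / 2) * ∫ w : ℝ, gfun (-1/τ) w * tw (-1/τ) ((-1/τ) * z) w =
      -I * (-I * τ) ^ (1/2 : ℂ) * ∫ w : ℝ, gfun τ w * tw τ z w := by
  have ht := tau_ne hτ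
  have h1 := J_formula hτ z
  have h2 := J_formula (neg_inv_im hτ) ((-1/τ) * z)
  have h3 := thT_fe hτ z
  have h4 := eta3_fe hτ
  have h5 := gauss_match hτ z
  have h6 := sqrt_sq' hτ
  have hs : (-I * τ) ^ (1/2 : ℂ) ≠ 0 := by
    intro h; rw [h] at h6
    apply mul_ne_zero (neg_ne_zero.2 I_ne_zero) ht
    rw [← h6]; ring
  have h7 := eta3_ne_zero (neg_inv_im hτ)
  have hp : (Real.pi : ℂ) ≠ 0 := by exact_mod_cast Real.pi_pos.ne'
  have hσ : (-1/τ) ≠ 0 := div_ne_zero (by norm_num) ht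
  have hτσ : τ * (-1/τ) = -1 := by field_simp
  rw [h3, h4, ← h5] at h1
  generalize (-I * τ) ^ (1/2 : ℂ) = s at *
  generalize (∫ w : ℝ, gfun τ w * tw τ z w) = A at *
  generalize (∫ w : ℝ, gfun (-1/τ) w * tw (-1/τ) ((-1/τ) * z) w) = B at *
  generalize cexp (-(Real.pi * ((-1/τ) * z)^2 / (2 * ((-1/τ).im : ℂ)))) = G at *
  generalize e (z^2 * (-1/τ) / 2) = E at *
  generalize thT (-1/τ) ((-1/τ) * z) = T at *
  generalize eta3 (-1/τ) = Y at *
  clear h3 h4 h5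
  generalize -1/τ = σ at *
  have hk : (2 * Real.pi * I * z)^2 * σ^2 ≠ 0 := by
    exact mul_ne_zero (pow_ne_zero 2 (mul_ne_zero (mul_ne_zero (mul_ne_zero two_ne_zero hp) I_ne_zero) hz)) (pow_ne_zero 2 hσ)
  have h1' : (2 * Real.pi * I * z)^2 * A * σ = E * (T / (I * Y)) - 2 * Real.pi * I * z * σ * (E * G) := by
    rw [h1]
    have := I_ne_zero
    field_simp
  have hss : s^2 * σ = I := by rw [h6]; linear_combination (-I) * hτσ
  apply mul_left_cancel₀ hk
  have hL : (2 * Real.pi * I * z)^2 * σ^2 * (1 / s * E * B) = (1/s) * (E * ((2 * Real.pi * I * (σ * z))^2 * B)) := by ring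
  rw [hL, h2]
  have : E * (T / (I * Y) - 2 * Real.pi * I * (σ * z) * G) = (2 * Real.pi * I * z)^2 * A * σ := by rw [h1']; ring
  rw [this]
  have hss' : 1 / s * σ = -I * s * σ^2 := by
    field_simp
    linear_combination (I * hss + I_sq)
  linear_combination ((2 * Real.pi * I * z)^2 * A) * hss'

lemma norm_e_real (t : ℝ) : ‖e (t : ℂ)‖ = 1 := by rw [norm_e]; simp

lemma fubini {τ : ℂ} (hτ : 0 < τ.im) {g : ℝ → ℂ} (hg : Integrable g) (z : ℂ) :
    ∫ y, tw τ z y * fourierT g y =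
      1 / (-I * τ) ^ (1/2 : ℂ) * e (z^2 * (-1/τ) / 2) * ∫ w : ℝ, g w * tw (-1/τ) ((-1/τ) * z) w := by
  have hint : Integrable (fun p : ℝ × ℝ => tw τ z p.1 * g p.2 * e ((p.2 * p.1 : ℝ))) (volume.prod volume) := by
    refine ((tw_integrable hτ z).mul_prod hg).mul_bdd (c := 1) ?_ (.of_forall fun p => (norm_e_real _).le)
    exact (continuous_e.comp (by fun_prop)).aestronglyMeasurable
  have h1 : ∀ y, tw τ z y * fourierT g y = ∫ w, tw τ z y * g w * e ((w * y : ℝ)) := by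
    intro y
    unfold fourierT
    rw [← integral_const_mul]
    simp_rw [mul_assoc]
  simp_rw [h1]
  rw [integral_integral_swap hint, ← integral_const_mul]
  congr 1; funext w
  have h2 : ∀ y, tw τ z y * g w * e ((w * y : ℝ)) = g w * tw τ (z + w) y := by
    intro y
    unfold tw
    rw [show (y:ℂ)^2 * τ / 2 + y * (z + w) = ((y:ℂ)^2 * τ / 2 + y * z) + ((w * y : ℝ):ℂ) by push_cast; ring, e_add _ ((w * y : ℝ):ℂ)]
    ring
  simp_rw [h2]
  rw [integral_const_mul, tw_integral hτ]
  have h3 : e ((z + w)^2 * (-1/τ) / 2) = e (z^2 * (-1/τ) / 2) * tw (-1/τ) ((-1/τ) * z) w := by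
    unfold tw
    rw [← e_add]; congr 1; ring
  rw [h3]; ring

lemma fourierT_continuous {g : ℝ → ℂ} (hg : Integrable g) : Continuous (fourierT g) := by
  unfold fourierT
  refine continuous_of_dominated (bound := fun w => ‖g w‖) (fun x => ?_) (fun x => .of_forall fun w => ?_) hg.norm (.of_forall fun w => ?_)
  · exact hg.1.mul (continuous_e.comp (by fun_prop)).aestronglyMeasurable
  · rw [norm_mul, norm_e_real, mul_one]
  · exact continuous_const.mul (continuous_e.comp (by fun_prop))

lemma fourierT_bound (g : ℝ → ℂ) (y : ℝ) : ‖fourierT g y‖ ≤ ∫ w, ‖g w‖ := by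
  unfold fourierT
  refine (norm_integral_le_integral_norm _).trans (le_of_eq ?_)
  congr 1; funext w
  rw [norm_mul, norm_e_real, mul_one]

lemma sign_contAt {x : ℝ} (hx : x ≠ 0) : ContinuousAt (fun y : ℝ => (Real.sign y : ℂ)) x := by
  rcases lt_or_gt_of_ne hx with h | h
  · refine continuousAt_const.congr (f := fun _ => ((-1:ℝ):ℂ)) ?_
    filter_upwards [gt_mem_nhds h] with y hy
    rw [Real.sign_of_neg hy]
  · refine continuousAt_const.congr (f := fun _ => ((1:ℝ):ℂ)) ?_
    filter_upwards [lt_mem_nhds h] with y hy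
    rw [Real.sign_of_pos hy]

lemma gfun_contAt {τ : ℂ} (hτ : 0 < τ.im) {x : ℝ} (hx : x ≠ 0) : ContinuousAt (gfun τ) x := by
  have hS := sign_contAt hx
  have hE : Continuous fun x : ℝ => e (-(x : ℂ)^2 * τ / 2) := continuous_e.comp (by fun_prop)
  have := continuous_erfc
  unfold gfun gplus gstar
  simp_rw [gplus_tsum]
  refine ContinuousAt.sub ((hE.continuousAt.mul (hS.div_const _)).mul ?_) ((hE.continuousAt.mul (hS.div_const _)).mul ?_)
  · refine Continuous.continuousAt ?_
    refine continuous_tsum (fun n => by fun_prop) ((summable_bco hτ).comp_injective Nat.cast_injective) fun n x => ?_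
    simp only [Function.comp]
    rw [norm_mul, norm_aco, bco, Complex.norm_real, Real.norm_eq_abs, abs_of_nonneg (le_max_right _ _)]
    have h0 : |((n:ℤ):ℝ)+1/2| = (n:ℝ)+1/2 := by
      rw [abs_of_nonneg (by positivity)]; push_cast; rfl
    rw [h0]
    refine mul_le_mul_of_nonneg_right ?_ (Real.exp_nonneg _)
    apply max_le
    · linarith [abs_nonneg x]
    · positivity
  · exact Continuous.continuousAt (by fun_prop)

lemma gfun_odd (τ : ℂ) (x : ℝ) : gfun τ (-x) = - gfun τ x := by
  unfold gfun gplus gstar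
  rw [Real.sign_neg, abs_neg]
  push_cast
  rw [neg_sq]
  ring

lemma gfun_fourier_ne (τ : ℂ) (hτ : 0 < τ.im) (x : ℝ) (hx : x ≠ 0) :
    fourierT (gfun (-1/τ)) x = -I * ((-I * τ) ^ ((1:ℂ)/2)) * gfun τ x := by
  have hg := gfun_integrable (neg_inv_im hτ)
  have hg' := gfun_integrable hτ
  set s := (-I * τ) ^ ((1:ℂ)/2) with hs
  set H : ℝ → ℂ := fun y => tw τ 0 y * fourierT (gfun (-1/τ)) y + I * s * (gfun τ y * tw τ 0 y) with hH
  have i1 : ∀ z : ℝ, Integrable fun y => tw τ z y * fourierT (gfun (-1/τ)) y := fun z =>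
    (tw_integrable hτ z).mul_bdd (fourierT_continuous hg).aestronglyMeasurable (.of_forall (fourierT_bound _))
  have i2 : ∀ z : ℝ, Integrable fun y => gfun τ y * tw τ z y := fun z =>
    hg'.mul_bdd (tw_continuous τ z).aestronglyMeasurable (.of_forall (tw_bound hτ z))
  have iH : Integrable H := by
    have := (i1 0).add ((i2 0).const_mul (I * s))
    simp only [ofReal_zero] at this
    exact this
  have hF : ∀ ξ : ℝ, ξ ≠ 0 → FourierTransform.fourier H ξ = 0 := by
    intro ξ hξ
    rw [Real.fourier_real_eq_integral_exp_smul]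
    have : ∀ y : ℝ, cexp (↑(-2 * Real.pi * y * ξ) * I) • H y =
        tw τ ((-ξ : ℝ):ℂ) y * fourierT (gfun (-1/τ)) y + I * s * (gfun τ y * tw τ ((-ξ : ℝ):ℂ) y) := by
      intro y
      have h1 : tw τ ((-ξ : ℝ):ℂ) y = cexp (↑(-2 * Real.pi * y * ξ) * I) * tw τ 0 y := by
        unfold tw e
        rw [← Complex.exp_add]; congr 1; push_cast; ring
      rw [h1, smul_eq_mul, hH]; ring
    simp_rw [this]
    rw [integral_add (i1 (-ξ)) ((i2 (-ξ)).const_mul _), integral_const_mul, fubini hτ hg, key hτ (by simpa using hξ)]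
    ring
  have hae : FourierTransform.fourier H =ᵐ[volume] 0 := by
    have : ∀ᵐ w : ℝ, w ≠ 0 := by simp [ae_iff]
    filter_upwards [this] with w hw using hF w hw
  have iF : Integrable (FourierTransform.fourier H) := (integrable_zero _ _ _).congr hae.symm
  have hc : ContinuousAt H x := by
    have hc1 := (tw_continuous τ 0).continuousAt (x := x)
    exact (hc1.mul (fourierT_continuous hg).continuousAt).add (continuousAt_const.mul ((gfun_contAt hτ hx).mul hc1))
  have hinv := iH.fourierInv_fourier_eq iF hc
  have h0 : FourierTransformInv.fourierInv (FourierTransform.fourier H) x = 0 := by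
    rw [Real.fourierInv_eq]
    rw [integral_congr_ae (g := fun _ => 0)]
    · simp
    · filter_upwards [hae] with v hv
      rw [hv]; simp
  rw [h0] at hinv
  have h1 : tw τ 0 x * (fourierT (gfun (-1/τ)) x + I * s * gfun τ x) = 0 := by
    have h2 : H x = tw τ 0 x * fourierT (gfun (-1/τ)) x + I * s * (gfun τ x * tw τ 0 x) := rfl
    rw [h2] at hinv
    linear_combination -hinv
  rcases mul_eq_zero.1 h1 with h | h
  · exact absurd h (e_ne_zero _)
  · linear_combination h

/-- `F(g_{-1/τ})(x) = -i·√(-iτ)·g_τ(x)`. -/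
theorem gfun_fourier (τ : ℂ) (hτ : 0 < τ.im) (x : ℝ) :
    fourierT (gfun (-1/τ)) x =
      -Complex.I * ((-Complex.I * τ) ^ ((1:ℂ)/2)) * gfun τ x := by
  rcases eq_or_ne x 0 with rfl | hx
  · have h0 : gfun τ 0 = 0 := by
      have := gfun_odd τ 0
      rw [neg_zero] at this
      linear_combination this / 2
    have h1 : ∫ w, gfun (-1/τ) w = 0 := by
      have := integral_neg_eq_self (gfun (-1/τ)) volume
      simp_rw [gfun_odd] at this
      rw [integral_neg] at this
      linear_combination - this / 2
    have h2 : e ((0:ℝ):ℂ) = 1 := by unfold e; simp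
    unfold fourierT
    simp only [mul_zero, h2, mul_one]
    rw [h0, h1, mul_zero]
  · exact gfun_fourier_ne τ hτ x hx
end

section
/- Let N be a positive even integer and τ ∈ H. Then the series G_τ(x) := ∑_{n ∈ ℤ} g_τ(Nn + x) converges absolutely for every x ∈ ℝ, and the convergence is uniform for x in compact subsets of ℝ ∖ (ℤ+1/2). -/
open Complex MeasureTheory
open scoped Classical

theorem aux_norm_e (w : ℂ) : ‖e w‖ = Real.exp (-(2 * Real.pi * w.im)) := by
  unfold e
  rw [Complex.norm_exp]
  congr 1
  simp

theorem aux_norm_e1 (τ : ℂ) (y : ℝ) :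
    ‖e (-(y : ℂ)^2 * τ / 2)‖ = Real.exp (Real.pi * τ.im * y^2) := by
  rw [aux_norm_e]
  congr 1
  have : (-(y : ℂ)^2 * τ / 2) = ((-y^2/2 : ℝ) : ℂ) * τ := by push_cast; ring
  rw [this, Complex.im_ofReal_mul]
  ring

theorem aux_norm_e2 (τ : ℂ) (m : ℤ) :
    ‖e (((m : ℂ) + 1/2)^2 / 2 * τ + ((m : ℂ) + 1/2) / 2)‖
      = Real.exp (-(Real.pi * τ.im * ((m : ℝ) + 1/2)^2)) := by
  rw [aux_norm_e]
  congr 1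
  have : (((m : ℂ) + 1/2)^2 / 2 * τ + ((m : ℂ) + 1/2) / 2)
      = (((m + 1/2)^2/2 : ℝ) : ℂ) * τ + (((m + 1/2)/2 : ℝ) : ℂ) := by push_cast; ring
  rw [this, Complex.add_im, Complex.im_ofReal_mul, Complex.ofReal_im]
  ring

theorem aux_sum : Summable (fun k : ℤ => Real.exp (-|(k : ℝ)|)) := by
  apply Summable.of_nat_of_neg
  · simpa using Real.summable_exp_neg_nat
  · simpa using Real.summable_exp_neg_nat

theorem aux_sum_c (c : ℝ) (hc : 0 < c) : Summable (fun k : ℤ => Real.exp (-(c * |(k : ℝ)|))) := by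
  have h : Summable (fun n : ℕ => Real.exp ((n : ℝ) * (-c))) :=
    Real.summable_exp_nat_mul_iff.2 (by linarith)
  apply Summable.of_nat_of_neg
  · refine h.congr fun n => ?_
    congr 1; simp; ring
  · refine h.congr fun n => ?_
    congr 1; simp; ring

theorem aux_sign (y : ℝ) : ‖((Real.sign y : ℝ) : ℂ)‖ ≤ 1 := by
  rw [Complex.norm_real]
  rcases Real.sign_apply_eq y with h | h | h <;> simp [h]

theorem aux_te (a t : ℝ) (ha : 0 < a) :
    t * Real.exp (-(a * t^2)) ≤ Real.exp (1 / a) * Real.exp (-t) := by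
  have h1 : t ≤ Real.exp t := by linarith [Real.add_one_le_exp t]
  calc t * Real.exp (-(a * t^2)) ≤ Real.exp t * Real.exp (-(a * t^2)) := by gcongr
    _ ≤ _ := by
      rw [← Real.exp_add, ← Real.exp_add]
      apply Real.exp_le_exp.2
      have : 0 ≤ a * (t - 1/a)^2 := by positivity
      have h2 : a * (t - 1/a)^2 = a * t^2 - 2 * t + 1 / a := by field_simp; ring
      linarith

theorem aux_erfc (z : ℝ) (hz : 0 ≤ z) : 0 ≤ erfc z ∧ erfc z ≤ 2 * Real.exp (-z^2) := by
  have hg : Integrable (fun t : ℝ => Real.exp (-1 * t^2)) := integrable_exp_neg_mul_sq one_pos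
  have hg' : Integrable (fun t : ℝ => Real.exp (-t^2)) := by simpa using hg
  have hs : Integrable (fun t : ℝ => Real.exp (-(t - z)^2)) := hg'.comp_sub_right z
  have hpi : 0 < Real.sqrt Real.pi := Real.sqrt_pos.2 Real.pi_pos
  have hI : ∫ t : ℝ, Real.exp (-(t - z)^2) = Real.sqrt Real.pi := by
    rw [integral_sub_right_eq_self (fun t : ℝ => Real.exp (-t^2)) z]
    have := integral_gaussian 1
    simpa using this
  unfold erfc
  have h0 : 0 ≤ ∫ t in Set.Ioi z, Real.exp (-t^2) :=
    integral_nonneg fun t => (Real.exp_pos _).le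
  refine ⟨by positivity, ?_⟩
  have h1 : ∫ t in Set.Ioi z, Real.exp (-t^2) ≤ Real.exp (-z^2) * Real.sqrt Real.pi := by
    calc ∫ t in Set.Ioi z, Real.exp (-t^2)
        ≤ ∫ t in Set.Ioi z, Real.exp (-z^2) * Real.exp (-(t - z)^2) := by
          apply setIntegral_mono_on hg'.integrableOn (hs.const_mul _).integrableOn
            measurableSet_Ioi
          intro t ht
          have ht' : z < t := ht
          rw [← Real.exp_add]
          apply Real.exp_le_exp.2
          nlinarith
      _ ≤ ∫ t, Real.exp (-z^2) * Real.exp (-(t - z)^2) := by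
          apply setIntegral_le_integral (hs.const_mul _)
          exact Filter.Eventually.of_forall fun t => by positivity
      _ = _ := by rw [integral_const_mul, hI]
  calc _ ≤ (2 / Real.sqrt Real.pi) * (Real.exp (-z^2) * Real.sqrt Real.pi) := by gcongr
    _ = _ := by field_simp

theorem aux_gstar (τ : ℂ) (hτ : 0 < τ.im) (y : ℝ) :
    ‖gstar τ y‖ ≤ Real.exp (-(Real.pi * τ.im * y^2)) := by
  have hv : 0 ≤ 2 * Real.pi * τ.im := by have := Real.pi_pos; positivity
  obtain ⟨h0, h1⟩ := aux_erfc (Real.sqrt (2 * Real.pi * τ.im) * |y|) (by positivity)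
  rw [mul_pow, Real.sq_sqrt hv, sq_abs] at h1
  unfold gstar
  rw [norm_mul, norm_mul, norm_div, aux_norm_e1,
    Complex.norm_real (erfc _), Real.norm_of_nonneg h0]
  calc _ ≤ Real.exp (Real.pi * τ.im * y^2) * (1 / 2) *
        (2 * Real.exp (-(2 * Real.pi * τ.im * y^2))) := by
        gcongr
        · exact aux_sign y
        · simp
    _ = Real.exp (Real.pi * τ.im * y^2) * Real.exp (-(2 * Real.pi * τ.im * y^2)) := by ring
    _ = _ := by rw [← Real.exp_add]; congr 1; ring

theorem aux_gplus (τ : ℂ) (hτ : 0 < τ.im) (δ : ℝ) :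
    ∃ A : ℝ, 0 ≤ A ∧ ∀ y : ℝ, (∀ m : ℤ, |y| < (m : ℝ) + 1/2 → δ ≤ (m : ℝ) + 1/2 - |y|) →
      ‖gplus τ y‖ ≤ A * Real.exp (-(2 * (Real.pi * τ.im) * δ * |y|)) := by
  set a := Real.pi * τ.im with ha_def
  have ha : 0 < a := mul_pos Real.pi_pos hτ
  set S := ∑' k : ℤ, Real.exp (-|(k : ℝ)|) with hS
  have hS0 : 0 ≤ S := tsum_nonneg fun k => (Real.exp_pos _).le
  refine ⟨‖1 / (Complex.I * eta3 τ)‖ * (Real.exp (1/a) * Real.exp (1/2) * S), by positivity, ?_⟩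
  intro y hy
  set D := Real.exp (-(2 * a * δ * |y|)) with hD
  set F : ℤ → ℂ := fun m => if |y| < (m : ℝ) + 1/2 then
      (((m : ℝ) + 1/2 - |y| : ℝ) : ℂ) * e (((m : ℂ) + 1/2)^2 / 2 * τ + ((m : ℂ) + 1/2) / 2)
    else 0 with hF
  set B : ℝ := Real.exp (-(a * y^2)) * D * (Real.exp (1/a) * Real.exp (1/2)) with hB
  have hb : ∀ m : ℤ, ‖F m‖ ≤ B * Real.exp (-|((m - ⌊|y|⌋ : ℤ) : ℝ)|) := by
    intro m
    simp only [hF]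
    split_ifs with h
    · have hd := hy m h
      rw [norm_mul, aux_norm_e2, Complex.norm_real, Real.norm_of_nonneg (by linarith)]
      set t : ℝ := (m : ℝ) + 1/2 - |y| with ht
      have ht0 : 0 < t := by linarith
      have e1 : Real.exp (-(Real.pi * τ.im * ((m : ℝ) + 1/2)^2))
          = Real.exp (-(a * y^2)) * Real.exp (-(2 * a * t * |y|)) * Real.exp (-(a * t^2)) := by
        rw [← Real.exp_add, ← Real.exp_add]
        congr 1
        have : (m : ℝ) + 1/2 = t + |y| := by rw [ht]; ring
        rw [this, ← sq_abs y]
        ring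
      rw [e1]
      have e2 : Real.exp (-(2 * a * t * |y|)) ≤ D := by
        apply Real.exp_le_exp.2
        have : 2 * a * δ * |y| ≤ 2 * a * t * |y| := by gcongr
        linarith
      have e3 := aux_te a t ha
      have e4 : Real.exp (-t) ≤ Real.exp (1/2) * Real.exp (-|((m - ⌊|y|⌋ : ℤ) : ℝ)|) := by
        rw [← Real.exp_add]
        apply Real.exp_le_exp.2
        have f1 := Int.floor_le |y|
        have f2 := Int.lt_floor_add_one |y|
        have hk : (0 : ℤ) ≤ m - ⌊|y|⌋ := by
          have : (⌊|y|⌋ : ℝ) < (m : ℝ) + 1 := by linarith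
          have : ⌊|y|⌋ < m + 1 := by exact_mod_cast this
          omega
        have hk' : (0 : ℝ) ≤ ((m - ⌊|y|⌋ : ℤ) : ℝ) := by exact_mod_cast hk
        rw [abs_of_nonneg hk']
        push_cast
        linarith
      calc t * (Real.exp (-(a * y^2)) * Real.exp (-(2 * a * t * |y|)) * Real.exp (-(a * t^2)))
          = Real.exp (-(a * y^2)) * Real.exp (-(2 * a * t * |y|)) *
            (t * Real.exp (-(a * t^2))) := by ring
        _ ≤ Real.exp (-(a * y^2)) * D * (Real.exp (1 / a) *
            (Real.exp (1/2) * Real.exp (-|((m - ⌊|y|⌋ : ℤ) : ℝ)|))) := by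
            have e5 := e3.trans (mul_le_mul_of_nonneg_left e4 (Real.exp_pos (1 / a)).le)
            exact mul_le_mul (mul_le_mul_of_nonneg_left e2 (Real.exp_pos _).le) e5
              (by positivity) (by positivity)
        _ = _ := by rw [hB]; ring
    · rw [norm_zero]; positivity
  have hsum : HasSum (fun m : ℤ => B * Real.exp (-|((m - ⌊|y|⌋ : ℤ) : ℝ)|)) (B * S) :=
    ((Equiv.subRight ⌊|y|⌋).hasSum_iff.2 aux_sum.hasSum).mul_left B
  have hT : ‖∑' m, F m‖ ≤ B * S := tsum_of_norm_bounded hsum hb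
  have hg : gplus τ y = e (-(y : ℂ)^2 * τ / 2) * ((Real.sign y : ℂ) / (Complex.I * eta3 τ)) *
    ∑' m, F m := rfl
  rw [hg, norm_mul, norm_mul, aux_norm_e1, div_eq_mul_one_div, norm_mul]
  calc _ ≤ Real.exp (a * y^2) * (1 * ‖1 / (Complex.I * eta3 τ)‖) * (B * S) := by
        gcongr
        exact aux_sign y
    _ = (Real.exp (a * y^2) * Real.exp (-(a * y^2))) * (‖1 / (Complex.I * eta3 τ)‖ *
        (Real.exp (1/a) * Real.exp (1/2) * S) * D) := by rw [hB]; ring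
    _ = _ := by rw [← Real.exp_add]; simp

theorem aux_dist (K : Set ℝ) (hK : IsCompact K) (A : Set ℤ)
    (h : ∀ x ∈ K, ∀ m ∈ A, x ≠ (m : ℝ) + 1/2) :
    ∃ δ > 0, ∀ x ∈ K, ∀ m ∈ A, δ ≤ |(m : ℝ) + 1/2 - x| := by
  have hc : IsClosed ((fun m : ℤ => (m : ℝ) + 1/2) '' A) := by
    have h1 : IsClosed ((fun m : ℤ => (m : ℝ)) '' A) :=
      Int.isClosedEmbedding_coe_real.isClosedMap A (isClosed_discrete A)
    have h2 := (Homeomorph.addRight (1/2 : ℝ)).isClosedMap _ h1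
    rw [Set.image_image] at h2
    exact h2
  obtain ⟨δ, hδ, hsub⟩ := hK.exists_cthickening_subset_open hc.isOpen_compl (by
    rintro x hx ⟨m, hm, rfl⟩
    exact h _ hx m hm rfl)
  refine ⟨δ, hδ, fun x hx m hm => ?_⟩
  by_contra hlt
  push Not at hlt
  refine hsub (Metric.mem_cthickening_of_dist_le ((m : ℝ) + 1/2) x δ K hx ?_) ⟨m, hm, rfl⟩
  rw [Real.dist_eq]
  exact hlt.le

theorem aux_main (N : ℕ) (hN : 0 < N) (τ : ℂ) (hτ : 0 < τ.im) (K : Set ℝ) (hK : IsCompact K)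
    (δ : ℝ) (hδ : 0 < δ) (h : ∀ x ∈ K, ∀ m : ℤ, x ≠ (m : ℝ) + 1/2 → δ ≤ |(m : ℝ) + 1/2 - x|) :
    ∃ u : ℤ → ℝ, Summable u ∧ ∀ n : ℤ, ∀ x ∈ K, ‖gfun τ ((N : ℝ) * n + x)‖ ≤ u n := by
  obtain ⟨A, hA0, hA⟩ := aux_gplus τ hτ δ
  obtain ⟨R, hR⟩ := hK.isBounded.exists_norm_le
  set a := Real.pi * τ.im with ha_def
  have ha : 0 < a := mul_pos Real.pi_pos hτ
  set c := 2 * a * δ with hc_def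
  have hc : 0 < c := by positivity
  refine ⟨fun n => (A + Real.exp (a * δ^2)) * Real.exp (c * R) * Real.exp (-(c * |(n : ℝ)|)),
    (aux_sum_c c hc).mul_left _, ?_⟩
  intro n x hx
  set y := (N : ℝ) * n + x with hy
  have hp := hA y (by
    intro m hm
    rcases abs_cases y with ⟨h1, _⟩ | ⟨h1, _⟩
    · have hne : x ≠ ((m - N * n : ℤ) : ℝ) + 1/2 := by
        intro he
        push_cast at he
        rw [h1] at hm
        linarith
      have := h x hx _ hne
      push_cast at this
      rw [show (m : ℝ) - N * n + 1/2 - x = m + 1/2 - |y| by rw [h1, hy]; ring,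
        abs_of_pos (by linarith)] at this
      exact this
    · have hne : x ≠ ((-m - 1 - N * n : ℤ) : ℝ) + 1/2 := by
        intro he
        push_cast at he
        rw [h1] at hm
        linarith
      have := h x hx _ hne
      push_cast at this
      rw [show -(m : ℝ) - 1 - N * n + 1/2 - x = -(m + 1/2 - |y|) by rw [h1, hy]; ring,
        abs_neg, abs_of_pos (by linarith)] at this
      exact this)
  have hs : ‖gstar τ y‖ ≤ Real.exp (a * δ^2) * Real.exp (-(c * |y|)) := by
    refine (aux_gstar τ hτ y).trans ?_
    rw [← Real.exp_add]
    apply Real.exp_le_exp.2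
    have : 0 ≤ a * (|y| - δ)^2 := by positivity
    have h2 : a * (|y| - δ)^2 = a * y^2 - c * |y| + a * δ^2 := by
      rw [← sq_abs y, hc_def]; ring
    linarith
  have hyn : |(n : ℝ)| - R ≤ |y| := by
    have h1 : |x| ≤ R := hR x hx
    have h2 : |(N : ℝ) * n| ≤ |y| + |x| := by
      have : (N : ℝ) * n = y - x := by rw [hy]; ring
      rw [this]; exact abs_sub y x
    have h3 : |(n : ℝ)| ≤ |(N : ℝ) * n| := by
      rw [abs_mul, Nat.abs_cast]
      have : (1 : ℝ) ≤ N := by exact_mod_cast hN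
      nlinarith [abs_nonneg (n : ℝ)]
    linarith
  have he : Real.exp (-(c * |y|)) ≤ Real.exp (c * R) * Real.exp (-(c * |(n : ℝ)|)) := by
    rw [← Real.exp_add]
    apply Real.exp_le_exp.2
    nlinarith
  calc ‖gfun τ y‖ ≤ ‖gplus τ y‖ + ‖gstar τ y‖ := norm_sub_le _ _
    _ ≤ A * Real.exp (-(c * |y|)) + Real.exp (a * δ^2) * Real.exp (-(c * |y|)) := add_le_add hp hs
    _ = (A + Real.exp (a * δ^2)) * Real.exp (-(c * |y|)) := by ring
    _ ≤ (A + Real.exp (a * δ^2)) * (Real.exp (c * R) * Real.exp (-(c * |(n : ℝ)|))) := by gcongr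
    _ = _ := by ring

/-- absolute convergence of `G_τ(x) = ∑_{n ∈ ℤ} g_τ(Nn + x)`, uniformly on
compact subsets of `ℝ ∖ (ℤ+1/2)`. -/
theorem Gfun_convergence (N : ℕ) (hN : 0 < N) (hNe : Even N) (τ : ℂ) (hτ : 0 < τ.im) :
    (∀ x : ℝ, Summable (fun n : ℤ => ‖gfun τ ((N : ℝ) * n + x)‖)) ∧
    (∀ K : Set ℝ, IsCompact K → (∀ x ∈ K, ∀ m : ℤ, x ≠ (m : ℝ) + 1/2) →
      TendstoUniformlyOn (fun (s : Finset ℤ) (x : ℝ) => ∑ n ∈ s, gfun τ ((N : ℝ) * n + x))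
        (fun x => ∑' n : ℤ, gfun τ ((N : ℝ) * n + x)) Filter.atTop K) := by
  constructor
  · intro x
    obtain ⟨δ, hδ, h⟩ := aux_dist {x} isCompact_singleton {m : ℤ | x ≠ (m : ℝ) + 1/2} (by
      intro z hz m hm
      rw [Set.mem_singleton_iff.1 hz]
      exact hm)
    obtain ⟨u, hu, hb⟩ := aux_main N hN τ hτ {x} isCompact_singleton δ hδ (by
      intro z hz m hm
      rw [Set.mem_singleton_iff.1 hz] at hm
      exact h z hz m hm)
    exact Summable.of_nonneg_of_le (fun _ => norm_nonneg _) (fun n => hb n x rfl) hu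
  · intro K hK hKm
    obtain ⟨δ, hδ, h⟩ := aux_dist K hK Set.univ (fun x hx m _ => hKm x hx m)
    obtain ⟨u, hu, hb⟩ := aux_main N hN τ hτ K hK δ hδ (fun x hx m _ => h x hx m trivial)
    exact tendstoUniformlyOn_tsum hu hb
end
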